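/- Let $K$ be a field and $G$ the graph formed by two cycles $C_n$ and $C_m$ joined by a path with $k \geq 1$ internal vertices (so $N = |V(G)| = n + m + k$). If $N \equiv 1 \pmod 3$ and both $n \equiv 2$ and $m \equiv 2 \pmod 3$, then $\operatorname{ara}\, I(G) = \operatorname{pd}_R(R/I(G)) = \frac{2N-2}{3}$; if $N \equiv 1 \pmod 3$ but not both of $n, m$ are $\equiv 2 \pmod 3$, then $\operatorname{ara}\, I(G) = \operatorname{pd}_R(R/I(G)) = \frac{2N+1}{3}$. -/

import Mathlib

open MvPolynomial

/-- Arithmetical rank: the least number of elements of `R` generating `I` up to radical. -/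
noncomputable def araRank {R : Type} [CommRing R] (I : Ideal R) : ℕ :=
  sInf {s : ℕ | ∃ f : Fin s → R, (Ideal.span (Set.range f)).radical = I.radical}


/-- Projective dimension of an `R`-module `M`, characterized via vanishing of the
`Ext` functors: the least `d` such that `Ext^i(M, N) = 0` for all `i > d` and all `N`. -/
noncomputable def projDim (R : Type) [CommRing R] (M : Type) [AddCommGroup M]
    [Module R M] : ℕ∞ :=
  sInf {d : ℕ∞ | ∀ i : ℕ, d < i → ∀ N : ModuleCat R,
    Subsingleton (((Ext R (ModuleCat R) i).obj (Opposite.op (ModuleCat.of R M))).obj N)}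

/-- The `j`-th vertex of the connecting path `x₁ z₁ z₂ ⋯ z_k y₁` in the graph made of two
cycles `Cₙ` and `C_m` joined by a path with `k` internal vertices.  The `N = n + m + k`
vertices are indexed by `ZMod N`: `Cₙ` has vertices `0,…,n-1` (with `y₁ = 0`), `C_m`
has vertices `n,…,n+m-1` (with `x₁ = n`), and `z₁,…,z_k` are `n+m,…,n+m+k-1`. -/
def pathJoinVertex (n m k : ℕ) (j : ℕ) : ZMod (n + m + k) :=
  if j = 0 then ((n : ℕ) : ZMod (n + m + k))
  else if j = k + 1 then 0
  else ((n + m + j - 1 : ℕ) : ZMod (n + m + k))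

/-- The edge ideal of the graph consisting of two cycles `Cₙ` (vertices `0,…,n-1`) and
`C_m` (vertices `n,…,n+m-1`) joined by the path `x₁ z₁ ⋯ z_k y₁` with `k` internal
vertices `n+m,…,n+m+k-1`, where `x₁ = n` and `y₁ = 0`. -/
noncomputable def pathJoinIdeal (K : Type) [Field K] (n m k : ℕ) :
    Ideal (MvPolynomial (ZMod (n + m + k)) K) :=
  Ideal.span
    (((fun j : ℕ => (X ((j : ZMod (n + m + k))) * X (((j + 1 : ℕ) : ZMod (n + m + k))) :
        MvPolynomial (ZMod (n + m + k)) K)) '' Set.Iio (n - 1))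
      ∪ {X (((n - 1 : ℕ) : ZMod (n + m + k))) * X 0}
      ∪ ((fun j : ℕ => (X ((j : ZMod (n + m + k))) * X (((j + 1 : ℕ) : ZMod (n + m + k))) :
          MvPolynomial (ZMod (n + m + k)) K)) '' Set.Ico n (n + m - 1))
      ∪ {X (((n + m - 1 : ℕ) : ZMod (n + m + k))) * X (((n : ℕ) : ZMod (n + m + k)))}
      ∪ ((fun j : ℕ => (X (pathJoinVertex n m k j) * X (pathJoinVertex n m k (j + 1)) :
          MvPolynomial (ZMod (n + m + k)) K)) '' Set.Iio (k + 1)))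

/-!
Both invariants are squeezed between the number of explicit polynomials cutting out the
independence complex and a degree in which some `Ext` does not vanish.

Upper bound. A prime ideal contains the edge ideal if and only if the variables outside it form an
independent set. Edges and sums of two edges suffice to force this: if `b, c` are not both outside
the prime, then a prime containing `X a * X b + X c * X d` contains both summands, so a path on
`3 * j + 1` vertices is cut out by `2 * j` polynomials. These paths absorb most of the graph, and
only the edges around the junctions need other combinations.

Lyubeznik's inequality. Let `I` be a monomial ideal which is up to radical generated by `s`
elements. Repeating the Koszul step one generator at a time, with powers high enough for the
colon ideals to be stable, gives `J ≤ I` containing a power of `I` such that `R ⧸ J ⟶ R ⧸ I`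
induces zero on `Ext` above degree `s`. The polynomial ring is free over itself along
`X i ↦ X i ^ T`, and keeping the `T`-divisible exponents is an additive retraction which preserves
`I`. Hence, for large `T`, the identity of `R ⧸ I` factors through this map with restricted scalars,
so that `R ⧸ I` has projective dimension at most `s`, in every characteristic.

Lower bound. We compute `Ext` into the residue ring at a point with coordinates `0` and `1`. The
variables which are `1` at the point can be inverted, which replaces the complex by the star of the
support of the point. If the support is a maximal independent set, the star is a simplex and
`Ext` is nonzero in degree its codimension. If a cycle has length `1` modulo `3`, the support is
chosen so that the star is the independence complex of this cycle, up to variables in the ideal,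
and a Mayer–Vietoris sequence shortens the cycle by three vertices while lowering the degree of
`Ext` by two.
-/

section ExtendedFunctors

open CategoryTheory Limits

theorem subsingleton_Ext_obj_iff {R : Type} [CommRing R] (M N : ModuleCat.{0} R) (p : ℕ) :
    Subsingleton (((Ext R (ModuleCat R) (p + 1)).obj (Opposite.op M)).obj N) ↔
      Subsingleton (Abelian.Ext M N (p + 1)) := by
  let P := projectiveResolution M
  rw [← ModuleCat.isZero_iff_subsingleton, (P.isoExt (p + 1) N).isZero_iff,
    ← HomologicalComplex.exactAt_iff_isZero_homology,
    HomologicalComplex.exactAt_iff' _ p (p + 1) (p + 2) (by simp) (by simp),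
    ShortComplex.moduleCat_exact_iff]
  refine ⟨fun h => subsingleton_of_forall_eq 0 fun a => ?_, fun h f hf => ?_⟩
  · obtain ⟨f, hf, rfl⟩ := P.extMk_surjective a (p + 2) rfl
    exact (P.extMk_eq_zero_iff f (p + 2) rfl hf p rfl).2 (h f hf)
  · exact (P.extMk_eq_zero_iff f (p + 2) rfl hf p rfl).1 (Subsingleton.elim _ _)

theorem projDim_le_iff {R : Type} [CommRing R] {M : Type} [AddCommGroup M] [Module R M] {d : ℕ} :
    projDim R M ≤ d ↔ HasProjectiveDimensionLT (ModuleCat.of R M) (d + 1) := by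
  constructor
  · intro h
    rw [hasProjectiveDimensionLT_iff]
    intro i hi N a
    obtain ⟨p, rfl⟩ : ∃ p, i = p + 1 := ⟨i - 1, by omega⟩
    have hvanish := csInf_mem (s := {d : ℕ∞ | ∀ i : ℕ, d < i → ∀ N : ModuleCat R, Subsingleton
      (((Ext R (ModuleCat R) i).obj (Opposite.op (ModuleCat.of R M))).obj N)})
      ⟨⊤, fun _ hi => absurd hi not_top_lt⟩
    have := (subsingleton_Ext_obj_iff _ _ _).1
      (hvanish (p + 1) (h.trans_lt (by exact_mod_cast hi)) N)
    exact Subsingleton.elim _ _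
  · intro h
    refine sInf_le fun i hi N => ?_
    have hdi : d < i := by exact_mod_cast hi
    obtain ⟨p, rfl⟩ : ∃ p, i = p + 1 := ⟨i - 1, by omega⟩
    rw [subsingleton_Ext_obj_iff]
    exact HasProjectiveDimensionLT.subsingleton _ (d + 1) _ hdi N

end ExtendedFunctors

section KillsExtAbove

open CategoryTheory Limits Abelian

universe w v u

variable {C : Type u} [Category.{v} C] [Abelian C] [HasExt.{w} C]

/-- The morphism `g` induces zero on `Ext^i(-, M)` for every `i > s` and every `M`. For the identity
of `A` this says that `A` has projective dimension at most `s`. -/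
def KillsExtAbove {A B : C} (g : A ⟶ B) (s : ℕ) : Prop :=
  ∀ (M : C) (i : ℕ), s < i → ∀ α : Ext B M i, (Ext.mk₀ g).comp α (zero_add i) = 0

namespace KillsExtAbove

theorem precomp {A A' B : C} {g : A ⟶ B} {s : ℕ} (h : KillsExtAbove g s) (f : A' ⟶ A) :
    KillsExtAbove (f ≫ g) s := by
  intro M i hi α
  rw [← Ext.mk₀_comp_mk₀_assoc, h M i hi, Ext.comp_zero]

theorem postcomp {A B B' : C} {g : A ⟶ B} {s : ℕ} (h : KillsExtAbove g s) (f : B ⟶ B') :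
    KillsExtAbove (g ≫ f) s := by
  intro M i hi α
  rw [← Ext.mk₀_comp_mk₀_assoc, h M i hi]

theorem of_projective {P B : C} [Projective P] (g : P ⟶ B) (s : ℕ) : KillsExtAbove g s := by
  intro M i hi α
  obtain ⟨j, rfl⟩ : ∃ j, i = j + 1 := ⟨i - 1, by omega⟩
  exact Ext.eq_zero_of_projective _

theorem hasProjectiveDimensionLT {A : C} {s : ℕ} (h : KillsExtAbove (𝟙 A) s) :
    HasProjectiveDimensionLT A (s + 1) := by
  rw [hasProjectiveDimensionLT_iff]
  intro i hi M α
  simpa using h M i hi α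

theorem of_shortExact {S T : ShortComplex C} (hS : S.ShortExact) (hT : T.ShortExact) (φ : S ⟶ T)
    {Z : C} (g : T.X₃ ⟶ Z) {s : ℕ} (h₁ : KillsExtAbove φ.τ₁ s) (h₂ : KillsExtAbove (T.g ≫ g) s) :
    KillsExtAbove (φ.τ₃ ≫ g) (s + 1) := by
  intro M i hi α
  obtain ⟨j, rfl⟩ : ∃ j, i = 1 + j := ⟨i - 1, by omega⟩
  have hα := h₂ M (1 + j) (by omega) α
  rw [← Ext.mk₀_comp_mk₀_assoc] at hα
  obtain ⟨β, hβ⟩ := Ext.contravariant_sequence_exact₃ hT M _ hα rfl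
  rw [← Ext.mk₀_comp_mk₀_assoc, ← hβ,
    ← Ext.comp_assoc (a₁₂ := 1) (a₂₃ := 1 + j) _ _ _ (by omega) (by omega) (by omega),
    ← ShortComplex.ShortExact.extClass_naturality hS hT φ,
    Ext.comp_assoc (a₁₂ := 1) (a₂₃ := j) _ _ _ (by omega) (by omega) (by omega),
    h₁ M j (by omega), Ext.comp_zero]

theorem syzygy {S T : ShortComplex C} (hS : S.ShortExact) (hT : T.ShortExact) [Projective S.X₂]
    (φ : S ⟶ T) {s : ℕ} (h : KillsExtAbove φ.τ₃ (s + 1)) : KillsExtAbove φ.τ₁ s := by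
  intro M i hi α
  have hα : hS.extClass.comp ((Ext.mk₀ φ.τ₁).comp α (zero_add i)) (add_comm 1 i) = 0 := by
    rw [← Ext.comp_assoc (a₁₂ := 1) (a₂₃ := i) _ _ _ (by omega) (by omega) (by omega),
      ShortComplex.ShortExact.extClass_naturality hS hT φ,
      Ext.comp_assoc (a₁₂ := 1) (a₂₃ := i + 1) _ _ _ (by omega) (by omega) (by omega)]
    exact h M (i + 1) (by omega) _
  obtain ⟨β, hβ⟩ := Ext.contravariant_sequence_exact₁ hS M _ (add_comm 1 i) hα
  obtain ⟨j, rfl⟩ : ∃ j, i = j + 1 := ⟨i - 1, by omega⟩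
  rw [← hβ, Ext.eq_zero_of_projective β, Ext.comp_zero]

theorem exists_comp_eq {S : ShortComplex C} (hS : S.ShortExact) {A : C} {g : A ⟶ S.X₃}
    (h : KillsExtAbove g 0) : ∃ f : A ⟶ S.X₂, f ≫ S.g = g := by
  obtain ⟨f, hf⟩ := Ext.covariant_sequence_exact₃ A hS (Ext.mk₀ g) (zero_add 1)
    (h S.X₁ 1 one_pos hS.extClass)
  obtain ⟨f, rfl⟩ := (Ext.mk₀_bijective _ _).2 f
  rw [Ext.mk₀_comp_mk₀] at hf
  exact ⟨f, (Ext.mk₀_bijective _ _).1 hf⟩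

theorem map [EnoughProjectives C] {D : Type*} [Category* D] [Abelian D] [HasExt.{w} D] (F : C ⥤ D)
    [F.Additive] [PreservesFiniteLimits F] [PreservesFiniteColimits F]
    [F.PreservesProjectiveObjects] {A B : C} {g : A ⟶ B} {s : ℕ} (h : KillsExtAbove g s) :
    KillsExtAbove (F.map g) s := by
  let cover (X : C) : ShortComplex C := ShortComplex.mk _ _ (kernel.condition (Projective.π X))
  have hcover (X : C) : (cover X).ShortExact := { exact := ShortComplex.exact_kernel _ }
  have hproj (X : C) : Projective (F.obj (Projective.over X)) := inferInstance
  induction s generalizing A B with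
  | zero =>
    obtain ⟨f, rfl⟩ := h.exists_comp_eq (hcover B)
    rw [F.map_comp]
    exact (of_projective (F.map (cover B).g) 0).precomp _
  | succ s ih =>
    let q : Projective.over A ⟶ Projective.over B :=
      Projective.factorThru (Projective.π A ≫ g) (Projective.π B)
    have hq : q ≫ Projective.π B = Projective.π A ≫ g := Projective.factorThru_comp _ _
    let φ : cover A ⟶ cover B :=
      { τ₁ := kernel.map _ _ q g hq.symm
        τ₂ := q
        τ₃ := g
        comm₁₂ := by simp [cover]
        comm₂₃ := hq }
    have : Projective (cover A).X₂ := inferInstanceAs (Projective (Projective.over A))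
    have hφ : KillsExtAbove φ.τ₁ s := syzygy (hcover A) (hcover B) φ h
    rw [← Category.comp_id (F.map g)]
    exact of_shortExact ((hcover A).map F) ((hcover B).map F) (F.mapShortComplex.map φ)
      (𝟙 (F.obj B)) (ih hφ) (of_projective (P := F.obj (Projective.over B)) _ s)

end KillsExtAbove
end KillsExtAbove

section Quotients

open CategoryTheory Limits Abelian

universe u

variable {R : Type u} [CommRing R]

/-- The morphism `R ⧸ A ⟶ R ⧸ B` given by multiplication by `r`. -/
def quotMul {A B : Ideal R} (r : R) (h : A ≤ B.colon {r}) :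
    ModuleCat.of R (R ⧸ A) ⟶ ModuleCat.of R (R ⧸ B) :=
  ModuleCat.ofHom (Submodule.mapQ A B (LinearMap.mulRight R r) fun _ hx =>
    Submodule.mem_colon_singleton.1 (h hx))

/-- The projection `R ⧸ A ⟶ R ⧸ B` for `A ≤ B`. -/
def quotFactor {A B : Ideal R} (h : A ≤ B) :
    ModuleCat.of R (R ⧸ A) ⟶ ModuleCat.of R (R ⧸ B) :=
  ModuleCat.ofHom (Submodule.factor h)

theorem quot_hom_ext {A : Ideal R} {M : ModuleCat.{u} R} {f g : ModuleCat.of R (R ⧸ A) ⟶ M}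
    (h : ∀ x, f.hom (Ideal.Quotient.mk A x) = g.hom (Ideal.Quotient.mk A x)) : f = g :=
  ModuleCat.hom_ext (LinearMap.ext (Ideal.Quotient.mk_surjective.forall.2 h))

theorem quotFactor_comp {A B C : Ideal R} (h : A ≤ B) (h' : B ≤ C) :
    quotFactor h ≫ quotFactor h' = quotFactor (h.trans h') := quot_hom_ext fun _ => rfl

/-- The complex `R ⧸ (B : f) ⟶ R ⧸ B ⟶ R ⧸ (B + (f))`. -/
def colonComplex {A B : Ideal R} {f : R} (hA : A = B.colon {f}) : ShortComplex (ModuleCat.{u} R) :=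
  ShortComplex.mk (quotMul f hA.le)
    (quotFactor (le_sup_left : B ≤ B ⊔ Ideal.span {f})) (quot_hom_ext fun x =>
      Ideal.Quotient.eq_zero_iff_mem.2 (Ideal.mul_mem_left _ x
        (Ideal.mem_sup_right (Ideal.mem_span_singleton_self f))))

theorem colonComplex_shortExact {A B : Ideal R} {f : R} (hA : A = B.colon {f}) :
    (colonComplex hA).ShortExact where
  exact := by
    rw [ShortComplex.moduleCat_exact_iff]
    intro y hy
    obtain ⟨y, rfl⟩ := Ideal.Quotient.mk_surjective y
    obtain ⟨b, hb, z, hz, rfl⟩ := Submodule.mem_sup.1 (Ideal.Quotient.eq_zero_iff_mem.1 hy)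
    obtain ⟨w, rfl⟩ := Ideal.mem_span_singleton'.1 hz
    exact ⟨Ideal.Quotient.mk A w, Ideal.Quotient.eq.2 (by simpa using hb)⟩
  mono_f := by
    rw [ModuleCat.mono_iff_injective, injective_iff_map_eq_zero]
    intro x hx
    obtain ⟨x, rfl⟩ := Ideal.Quotient.mk_surjective x
    have hxA : x ∈ A := by
      rw [hA, Submodule.mem_colon_singleton]
      exact Ideal.Quotient.eq_zero_iff_mem.1 hx
    exact Ideal.Quotient.eq_zero_iff_mem.2 hxA
  epi_g := (ModuleCat.epi_iff_surjective _).2 (Submodule.factor_surjective le_sup_left)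

/-- The morphism of complexes `colonComplex` induced by an inclusion `B ≤ B'` and a factorization
`f = r * f'`; it is multiplication by `r` on the first terms. -/
def colonComplexMap {A B A' B' : Ideal R} {f' r : R} (hA : A = B.colon {r * f'})
    (hA' : A' = B'.colon {f'}) (hB : B ≤ B') : colonComplex hA ⟶ colonComplex hA' where
  τ₁ := quotMul r fun x hx => by
    rw [hA, Submodule.mem_colon_singleton] at hx
    rw [hA', Submodule.mem_colon_singleton, Submodule.mem_colon_singleton, smul_eq_mul, smul_eq_mul,
      mul_assoc]
    exact hB hx
  τ₂ := quotFactor hB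
  τ₃ := quotFactor (sup_le_sup hB (Ideal.span_singleton_le_span_singleton.2 ⟨r, mul_comm _ _⟩))
  comm₁₂ := quot_hom_ext fun x => congr_arg (Ideal.Quotient.mk B') (mul_assoc x r f')
  comm₂₃ := quot_hom_ext fun _ => rfl

theorem exists_colon_pow_mul_pow_eq [IsNoetherianRing R] (J : Ideal R) (f : R) (b : ℕ) :
    ∃ c, J.colon {f ^ c * f ^ b} = J.colon {f ^ c} := by
  have hmono : Monotone fun n => J.colon {f ^ n} := fun p q hpq x hx => by
    rw [Submodule.mem_colon_singleton] at hx ⊢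
    rw [← Nat.sub_add_cancel hpq, pow_add, smul_eq_mul, mul_left_comm]
    exact J.mul_mem_left _ hx
  obtain ⟨c, hc⟩ := monotone_stabilizes_iff_noetherian.2 ‹IsNoetherianRing R› ⟨_, hmono⟩
  exact ⟨c, by rw [← pow_add]; exact (hc (c + b) (Nat.le_add_right c b)).symm⟩

theorem KillsExtAbove.quotFactor_sup_span {J₂ J₁ J : Ideal R} {r g : R} {s : ℕ} {h₂₁ : J₂ ≤ J₁}
    {h₁ : J₁ ≤ J} (hk₂ : KillsExtAbove (quotFactor h₂₁) s) (hk₁ : KillsExtAbove (quotFactor h₁) s)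
    (hg : g ∈ J) (hr : J₂.colon {r * g} = J₂.colon {r}) (h : J₂ ⊔ Ideal.span {r * g} ≤ J) :
    KillsExtAbove (quotFactor h) (s + 1) := by
  have hJ : J₁ ⊔ Ideal.span {g} ≤ J := sup_le h₁ ((Ideal.span_singleton_le_iff_mem _).2 hg)
  let φ := colonComplexMap (rfl : J₂.colon {r * g} = _) (rfl : J₁.colon {g} = _) h₂₁
  have hφ : φ.τ₁ = quotMul r hr.le ≫ quotFactor h₂₁ ≫ quotFactor Ideal.le_colon :=
    quot_hom_ext fun _ => rfl
  have hτ₁ : KillsExtAbove φ.τ₁ s := by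
    rw [hφ]
    exact (hk₂.postcomp _).precomp _
  have hcomp : (colonComplex (rfl : J₁.colon {g} = _)).g ≫ quotFactor hJ = quotFactor h₁ :=
    quotFactor_comp _ _
  have hτ₃ : φ.τ₃ ≫ quotFactor hJ = quotFactor h := quotFactor_comp _ _
  rw [← hτ₃]
  exact of_shortExact (colonComplex_shortExact _) (colonComplex_shortExact _) φ (quotFactor hJ)
    hτ₁ (by rw [hcomp]; exact hk₁)

/-- The projective dimension of `R ⧸ I`, for `I` with `s` generators, may exceed `s`, but
approximating `I` by smaller ideals with the same radical kills the extra `Ext`. -/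
theorem exists_killsExtAbove_of_pow_le [IsNoetherianRing R] {s : ℕ} (f : Fin s → R) (J : Ideal R)
    (hJ : ∃ b, Ideal.span (Set.range f) ^ b ≤ J) :
    ∃ (J' : Ideal R) (h : J' ≤ J), (∃ b, Ideal.span (Set.range f) ^ b ≤ J') ∧
      KillsExtAbove (quotFactor h) s := by
  induction s generalizing J with
  | zero =>
    have : Module.Free R (R ⧸ (⊥ : Ideal R)) :=
      Module.Free.of_equiv (Submodule.quotEquivOfEqBot (⊥ : Ideal R) rfl).symm
    exact ⟨⊥, bot_le, ⟨1, by simp [Set.range_eq_empty]⟩, .of_projective _ 0⟩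
  | succ s ih =>
    obtain ⟨b, hb⟩ := hJ
    set I := Ideal.span (Set.range (Fin.tail f)) with hI
    have hIf : Ideal.span (Set.range f) = I ⊔ Ideal.span {f 0} := by
      rw [← Fin.cons_self_tail f, Fin.range_cons, Set.insert_eq, Ideal.span_union, sup_comm]
      rfl
    rw [hIf] at hb ⊢
    have hIb : I ^ b ≤ J := (Ideal.pow_right_mono le_sup_left b).trans hb
    have hfb : f 0 ^ b ∈ J := hb (Ideal.pow_mem_pow
      (Ideal.mem_sup_right (Ideal.mem_span_singleton_self _)) b)
    obtain ⟨J₁, h₁, hIJ₁, hk₁⟩ := ih (Fin.tail f) J ⟨b, hIb⟩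
    obtain ⟨J₂, h₂, ⟨b₂, hIJ₂⟩, hk₂⟩ := ih (Fin.tail f) J₁ hIJ₁
    obtain ⟨c, hc⟩ := exists_colon_pow_mul_pow_eq J₂ (f 0) b
    have hle : J₂ ⊔ Ideal.span {f 0 ^ c * f 0 ^ b} ≤ J :=
      sup_le (h₂.trans h₁) ((Ideal.span_singleton_le_iff_mem _).2 (J.mul_mem_left _ hfb))
    refine ⟨_, hle, ⟨b₂ + (c + b), ?_⟩, hk₂.quotFactor_sup_span hk₁ hfb hc _⟩
    refine Ideal.sup_pow_add_le_pow_sup_pow.trans ?_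
    rw [Ideal.span_singleton_pow, pow_add]
    exact sup_le_sup_right hIJ₂ _

end Quotients

section Expand

open CategoryTheory

universe u

theorem restrictScalars_preservesProjectiveObjects {R S : Type u} [CommRing R] [CommRing S]
    (f : R →+* S)
    (hf : Module.Projective R ((ModuleCat.restrictScalars.{u} f).obj (ModuleCat.of S S))) :
    (ModuleCat.restrictScalars.{u} f).PreservesProjectiveObjects where
  projective_obj {P} hP := by
    classical
    let := f.toAlgebra
    let : Module R P := Module.compHom P f
    have : IsScalarTower R S P := ⟨fun r s p => by rw [Algebra.smul_def, mul_smul]; rfl⟩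
    have : Module.Projective R S := hf
    obtain ⟨s, hs⟩ : Module.Projective S P := inferInstance
    have : Module.Projective R (P →₀ S) :=
      Module.Projective.of_equiv (finsuppLequivDFinsupp (ι := P) (M := S) R).symm
    have : Module.Projective R P := Module.Projective.of_split (M := P →₀ S) (s.restrictScalars R)
      ((Finsupp.linearCombination S id).restrictScalars R) (LinearMap.ext hs)
    exact @ModuleCat.projective_of_categoryTheory_projective R _
      ((ModuleCat.restrictScalars.{u} f).obj P) this

variable {σ K : Type u} [CommRing K]

/-- Keep the monomials whose exponent vector is congruent to `r` modulo `T`, and replace every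
exponent by its quotient by `T`. For `r = 0` this is an additive retraction of `expand T`, and as
`r` varies these are the coordinates of a polynomial in the basis of monomials with exponents
less than `T` over the image of `expand T`. -/
noncomputable def rootPart (T : ℕ) (r : σ →₀ ℕ) : MvPolynomial σ K →ₗ[K] MvPolynomial σ K :=
  open Classical in
  (basisMonomials σ K).constr K fun d =>
    if ∀ i, d i % T = r i then monomial (d.mapRange (· / T) (Nat.zero_div T)) 1 else 0

open Classical in
theorem rootPart_monomial (T : ℕ) (r d : σ →₀ ℕ) (c : K) :
    rootPart T r (monomial d c) =
      if ∀ i, d i % T = r i then monomial (d.mapRange (· / T) (Nat.zero_div T)) c else 0 := by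
  have h : monomial d c = c • basisMonomials σ K d := by
    rw [coe_basisMonomials, smul_monomial, smul_eq_mul, mul_one]
  rw [h, map_smul, rootPart, Module.Basis.constr_basis, smul_ite, smul_zero, smul_monomial,
    smul_eq_mul, mul_one]

theorem rootPart_expand_mul {T : ℕ} (hT : 0 < T) (r : σ →₀ ℕ) (p q : MvPolynomial σ K) :
    rootPart T r (expand T p * q) = p * rootPart T r q := by
  classical
  induction p using MvPolynomial.induction_on' with
  | add p₁ p₂ h₁ h₂ => rw [map_add, add_mul, map_add, h₁, h₂, add_mul]
  | monomial a c =>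
    induction q using MvPolynomial.induction_on' with
    | add q₁ q₂ h₁ h₂ => rw [mul_add, map_add, h₁, h₂, map_add, mul_add]
    | monomial d e =>
      have hmod : ∀ i, (T • a + d) i % T = d i % T := fun i => by simp
      rw [expand_monomial, monomial_mul, rootPart_monomial, rootPart_monomial]
      simp only [hmod, mul_ite, mul_zero, monomial_mul]
      refine if_congr Iff.rfl (congr_arg (monomial · _) ?_) rfl
      ext i
      simp [Nat.mul_add_div hT]

theorem rootPart_expand {T : ℕ} (hT : 0 < T) (p : MvPolynomial σ K) :
    rootPart T 0 (expand T p) = p := by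
  classical
  have h_one : rootPart T 0 (1 : MvPolynomial σ K) = 1 := by
    rw [← C_1, ← monomial_zero', rootPart_monomial]
    simp
  simpa only [mul_one, h_one] using rootPart_expand_mul hT 0 p 1

/-- The exponent vector with entries `r i < T`; the monomials with such exponents are a basis of the
polynomial ring over the image of `expand T`. -/
noncomputable def remainderExponent [Finite σ] {T : ℕ} (r : σ → Fin T) : σ →₀ ℕ :=
  Finsupp.equivFunOnFinite.symm fun i => (r i : ℕ)

theorem remainderExponent_apply [Finite σ] {T : ℕ} (r : σ → Fin T) (i : σ) :
    remainderExponent r i = r i := rfl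

theorem sum_monomial_mul_expand_rootPart [Fintype σ] [DecidableEq σ] {T : ℕ} (hT : 0 < T)
    (p : MvPolynomial σ K) :
    ∑ r : σ → Fin T, monomial (remainderExponent r) 1 *
      expand T (rootPart T (remainderExponent r) p) = p := by
  classical
  induction p using MvPolynomial.induction_on' with
  | add p q hp hq => simp only [map_add, mul_add, Finset.sum_add_distrib, hp, hq]
  | monomial d c =>
    rw [Finset.sum_eq_single fun i => (⟨d i % T, Nat.mod_lt _ hT⟩ : Fin T)]
    · rw [rootPart_monomial, if_pos (by simp [remainderExponent_apply]), expand_monomial,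
        monomial_mul, one_mul]
      congr 2
      ext i
      simp [remainderExponent_apply, Nat.mod_add_div]
    · intro r _ hr
      rw [rootPart_monomial, if_neg, map_zero, mul_zero]
      exact fun h => hr (funext fun i => Fin.ext (h i).symm)
    · exact fun h => absurd (Finset.mem_univ _) h

theorem expand_preservesProjectiveObjects [Finite σ] {T : ℕ} (hT : 0 < T) :
    (ModuleCat.restrictScalars.{u} (expand T :
      MvPolynomial σ K →ₐ[K] MvPolynomial σ K).toRingHom).PreservesProjectiveObjects := by
  classical
  have := Fintype.ofFinite σ
  apply restrictScalars_preservesProjectiveObjects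
  set M := (ModuleCat.restrictScalars.{u}
    (expand T : MvPolynomial σ K →ₐ[K] MvPolynomial σ K).toRingHom).obj
      (ModuleCat.of (MvPolynomial σ K) (MvPolynomial σ K))
  let coordinates : M →ₗ[MvPolynomial σ K] ((σ → Fin T) → MvPolynomial σ K) :=
    { toFun := fun p r => rootPart T (remainderExponent r) (p : MvPolynomial σ K)
      map_add' := fun p q => funext fun r => map_add (rootPart T _) (p : MvPolynomial σ K) q
      map_smul' := fun p q => funext fun r => rootPart_expand_mul hT _ p q }
  let combination : ((σ → Fin T) → MvPolynomial σ K) →ₗ[MvPolynomial σ K] M :=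
    { toFun := fun g => (∑ r : σ → Fin T, monomial (remainderExponent r) 1 * expand T (g r) :
        MvPolynomial σ K)
      map_add' := fun g h => by
        change (∑ r : σ → Fin T, monomial _ 1 * expand T (g r + h r) : MvPolynomial σ K) =
          (∑ r : σ → Fin T, _ : MvPolynomial σ K) + (∑ r : σ → Fin T, _ : MvPolynomial σ K)
        simp only [map_add, mul_add, Finset.sum_add_distrib]
      map_smul' := fun p g => by
        change (∑ r : σ → Fin T, monomial _ 1 * expand T (p * g r) : MvPolynomial σ K) =
          expand T p * (∑ r : σ → Fin T, _ : MvPolynomial σ K)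
        simp only [map_mul, Finset.mul_sum, mul_left_comm] }
  exact Module.Projective.of_split coordinates combination
    (LinearMap.ext fun p => sum_monomial_mul_expand_rootPart hT (p : MvPolynomial σ K))

end Expand

section Retraction

open CategoryTheory

universe u

variable {R : Type u} [CommRing R]

/-- The map `R ⧸ I ⟶ R ⧸ J` induced by a ring endomorphism `φ`, linear along `φ`. -/
noncomputable def quotToRestrictScalars (φ : R →+* R) {I J : Ideal R} (h : I ≤ J.comap φ) :
    ModuleCat.of R (R ⧸ I) ⟶ (ModuleCat.restrictScalars.{u} φ).obj (ModuleCat.of R (R ⧸ J)) :=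
  ModuleCat.ofHom (Y := ((ModuleCat.restrictScalars.{u} φ).obj (ModuleCat.of R (R ⧸ J)) :))
    { toFun := fun x => Ideal.quotientMap J φ h x
      map_add' := fun x y => map_add _ x y
      map_smul' := fun r x => by
        obtain ⟨x, rfl⟩ := Ideal.Quotient.mk_surjective x
        change Ideal.Quotient.mk J (φ (r * x)) = Ideal.Quotient.mk J (φ r * φ x)
        rw [map_mul] }

/-- The map `R ⧸ I ⟶ R ⧸ I` induced by an additive endomorphism `π` which is linear along `φ`. -/
noncomputable def restrictScalarsToQuot (φ : R →+* R) (π : R →+ R) {I : Ideal R}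
    (hI : ∀ x ∈ I, π x ∈ I) (hπ : ∀ r x, π (φ r * x) = r * π x) :
    (ModuleCat.restrictScalars.{u} φ).obj (ModuleCat.of R (R ⧸ I)) ⟶ ModuleCat.of R (R ⧸ I) :=
  ModuleCat.ofHom (X := ((ModuleCat.restrictScalars.{u} φ).obj (ModuleCat.of R (R ⧸ I)) :))
    { toFun := fun x => QuotientAddGroup.map I.toAddSubgroup I.toAddSubgroup π hI (x : R ⧸ I)
      map_add' := fun x y => map_add _ (x : R ⧸ I) y
      map_smul' := fun r x => by
        obtain ⟨x, rfl⟩ := Ideal.Quotient.mk_surjective (I := I) x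
        change Ideal.Quotient.mk I (π (φ r * x)) = Ideal.Quotient.mk I (r * π x)
        rw [hπ] }

/-- `R ⧸ I` is a retract, as a module, of `R ⧸ I` with scalars restricted along `φ`, by maps which
factor through `φ^* (R ⧸ J ⟶ R ⧸ I)`. -/
theorem KillsExtAbove.id_of_retraction (φ : R →+* R) (π : R →+ R) {I J : Ideal R} {s : ℕ}
    [(ModuleCat.restrictScalars.{u} φ).PreservesProjectiveObjects]
    (hI : ∀ x ∈ I, π x ∈ I) (hπ : ∀ r x, π (φ r * x) = r * π x)
    (hφπ : Function.LeftInverse π φ) (hIJ : I ≤ J.comap φ) {hJI : J ≤ I}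
    (hk : KillsExtAbove (quotFactor hJI) s) : KillsExtAbove (𝟙 (ModuleCat.of R (R ⧸ I))) s := by
  have hid : quotToRestrictScalars φ hIJ ≫
      (ModuleCat.restrictScalars.{u} φ).map (quotFactor hJI) ≫
      restrictScalarsToQuot φ π hI hπ = 𝟙 _ :=
    quot_hom_ext fun x => congr_arg (Ideal.Quotient.mk I) (hφπ x)
  rw [← hid]
  exact ((hk.map (ModuleCat.restrictScalars.{u} φ)).postcomp _).precomp _

end Retraction

section StanleyReisner

open CategoryTheory

universe u

variable {σ : Type u} (K : Type u) [CommRing K]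

/-- The Stanley–Reisner ideal of a simplicial complex `Δ`, given as the lower set of its faces: the
polynomials whose monomials are all supported on non-faces. -/
def srIdeal (Δ : LowerSet (Set σ)) : Ideal (MvPolynomial σ K) where
  carrier := {p | ∀ m ∈ p.support, (m.support : Set σ) ∉ Δ}
  zero_mem' := by simp
  add_mem' {p q} hp hq m hm := by
    classical
    exact (Finset.mem_union.1 (support_add hm)).elim (hp m) (hq m)
  smul_mem' r p hp m hm := by
    classical
    obtain ⟨a, _, b, hb, rfl⟩ := Finset.mem_add.1 (support_mul r p hm)
    refine fun h => hp b hb (Δ.lower (fun i hi => ?_) h)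
    simp only [Finset.mem_coe, Finsupp.mem_support_iff, Finsupp.add_apply] at hi ⊢
    omega

/-- The Stanley–Reisner ring as a module over the polynomial ring. -/
noncomputable abbrev srModule (Δ : LowerSet (Set σ)) : ModuleCat.{u} (MvPolynomial σ K) :=
  ModuleCat.of (MvPolynomial σ K) (MvPolynomial σ K ⧸ srIdeal K Δ)

variable {K} {Δ : LowerSet (Set σ)}

theorem mem_srIdeal {p : MvPolynomial σ K} :
    p ∈ srIdeal K Δ ↔ ∀ m ∈ p.support, (m.support : Set σ) ∉ Δ := Iff.rfl

theorem monomial_mem_srIdeal {m : σ →₀ ℕ} (hm : (m.support : Set σ) ∉ Δ) (c : K) :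
    monomial m c ∈ srIdeal K Δ := by
  intro m' hm'
  rwa [Finset.mem_singleton.1 (support_monomial_subset hm')]

theorem srIdeal_le_iff {J : Ideal (MvPolynomial σ K)} :
    srIdeal K Δ ≤ J ↔ ∀ m : σ →₀ ℕ, (m.support : Set σ) ∉ Δ → monomial m 1 ∈ J := by
  refine ⟨fun h m hm => h (monomial_mem_srIdeal hm 1), fun h p hp => ?_⟩
  rw [p.as_sum]
  refine J.sum_mem fun m hm => ?_
  rw [← mul_one (coeff m p), ← C_mul_monomial]
  exact J.mul_mem_left _ (h m (hp m hm))

theorem rootPart_mem_srIdeal {T : ℕ} {p : MvPolynomial σ K} (hp : p ∈ srIdeal K Δ) :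
    rootPart T 0 p ∈ srIdeal K Δ := by
  classical
  rw [p.as_sum, map_sum]
  refine Ideal.sum_mem _ fun m hm => ?_
  rw [rootPart_monomial]
  split_ifs with h
  · refine monomial_mem_srIdeal (fun hΔ => hp m hm (Δ.lower (fun i hi => ?_) hΔ)) _
    simp only [Finset.mem_coe, Finsupp.mem_support_iff, Finsupp.mapRange_apply] at hi ⊢
    intro h0
    rw [← Nat.div_add_mod (m i) T, h0, h i] at hi
    exact hi (by simp)
  · exact zero_mem _

theorem expand_mem_srIdeal_pow (T : ℕ) {p : MvPolynomial σ K} (hp : p ∈ srIdeal K Δ) :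
    expand T p ∈ srIdeal K Δ ^ T := by
  revert p
  change srIdeal K Δ ≤ (srIdeal K Δ ^ T).comap (expand T)
  refine srIdeal_le_iff.2 fun m hm => ?_
  have : expand T (monomial m (1 : K)) = monomial m 1 ^ T := by
    rw [expand_monomial, monomial_pow, one_pow]
  rw [Ideal.mem_comap, this]
  exact Ideal.pow_mem_pow (monomial_mem_srIdeal hm 1) T

/-- Lyubeznik's inequality. A high power of `I` lies in some `J` for which `R ⧸ J ⟶ R ⧸ I` kills
`Ext` above `s`; the identity of `R ⧸ I` factors through the restriction of this map along
`expand T` for large `T`. -/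
theorem hasProjectiveDimensionLT_of_radical_eq [Finite σ] [IsNoetherianRing K] {s : ℕ}
    (f : Fin s → MvPolynomial σ K)
    (hf : (Ideal.span (Set.range f)).radical = (srIdeal K Δ).radical) :
    HasProjectiveDimensionLT (srModule K Δ) (s + 1) := by
  obtain ⟨b, hb⟩ := Ideal.exists_pow_le_of_le_radical_of_fg (I := Ideal.span (Set.range f))
    (J := srIdeal K Δ) (hf ▸ Ideal.le_radical) (IsNoetherian.noetherian _)
  obtain ⟨c, hc⟩ := Ideal.exists_pow_le_of_le_radical_of_fg (I := srIdeal K Δ)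
    (J := Ideal.span (Set.range f)) (hf ▸ Ideal.le_radical) (IsNoetherian.noetherian _)
  obtain ⟨J, hJI, ⟨e, he⟩, hk⟩ := exists_killsExtAbove_of_pow_le f (srIdeal K Δ) ⟨b, hb⟩
  have hIJ : srIdeal K Δ ^ (c * e + 1) ≤ J := by
    refine (Ideal.pow_le_pow_right (Nat.le_succ _)).trans ?_
    rw [pow_mul]
    exact (Ideal.pow_right_mono hc e).trans he
  have hT : 0 < c * e + 1 := Nat.succ_pos _
  have := expand_preservesProjectiveObjects (σ := σ) (K := K) hT
  exact (hk.id_of_retraction _ (rootPart (c * e + 1) 0).toAddMonoidHom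
    (fun x hx => rootPart_mem_srIdeal hx) (rootPart_expand_mul hT 0)
    (rootPart_expand hT) fun x hx =>
      hIJ (expand_mem_srIdeal_pow _ hx)).hasProjectiveDimensionLT

end StanleyReisner

section FaceComplexes

universe u

variable {σ K : Type u} [CommRing K]

theorem srIdeal_inf (Δ Δ' : LowerSet (Set σ)) :
    srIdeal K (Δ ⊓ Δ') = srIdeal K Δ ⊔ srIdeal K Δ' := by
  apply le_antisymm
  · refine srIdeal_le_iff.2 fun m hm => ?_
    rcases not_and_or.1 hm with hm | hm
    · exact Ideal.mem_sup_left (monomial_mem_srIdeal hm 1)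
    · exact Ideal.mem_sup_right (monomial_mem_srIdeal hm 1)
  · exact sup_le (fun p hp m hm h => hp m hm h.1) fun p hp m hm h => hp m hm h.2

theorem srIdeal_sup (Δ Δ' : LowerSet (Set σ)) :
    srIdeal K (Δ ⊔ Δ') = srIdeal K Δ ⊓ srIdeal K Δ' := by
  ext p
  simp only [Ideal.mem_inf, mem_srIdeal, LowerSet.mem_sup_iff, not_or, forall_and]

theorem srIdeal_top : srIdeal K (⊤ : LowerSet (Set σ)) = ⊥ :=
  eq_bot_iff.2 (srIdeal_le_iff.2 fun _ hm => absurd (LowerSet.mem_top) hm)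

/-- The complex of all sets of vertices disjoint from `W`. -/
def avoiding (W : Set σ) : LowerSet (Set σ) where
  carrier := {F | Disjoint W F}
  lower' _ _ h hF := hF.mono_right h

theorem mem_avoiding {W F : Set σ} : F ∈ avoiding W ↔ ∀ v ∈ W, v ∉ F :=
  Set.disjoint_left

/-- The star of `T`, as a complex: the sets `F` such that `T ∪ F` is a face. -/
def faceStar (Δ : LowerSet (Set σ)) (T : Set σ) : LowerSet (Set σ) where
  carrier := {F | T ∪ F ∈ Δ}
  lower' _ _ h hF := Δ.lower (Set.union_subset_union_right T h) hF

theorem mem_faceStar {Δ : LowerSet (Set σ)} {T F : Set σ} : F ∈ faceStar Δ T ↔ T ∪ F ∈ Δ := Iff.rfl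

theorem srIdeal_avoiding_singleton (v : σ) :
    srIdeal K (avoiding {v}) = Ideal.span {X v} := by
  apply le_antisymm
  · refine srIdeal_le_iff.2 fun m hm => ?_
    rw [Ideal.mem_span_singleton, X_dvd_monomial]
    exact Or.inr (by simpa [mem_avoiding] using hm)
  · rw [Ideal.span_singleton_le_iff_mem]
    exact monomial_mem_srIdeal (by simp [mem_avoiding]) 1

theorem srIdeal_faceStar_singleton (Δ : LowerSet (Set σ)) (v : σ) :
    srIdeal K (faceStar Δ {v}) = (srIdeal K Δ).colon {X v} := by
  classical
  ext p
  have hsupp (m : σ →₀ ℕ) :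
      ((Finsupp.single v 1 + m).support : Set σ) = {v} ∪ (m.support : Set σ) := by
    ext i
    by_cases h : i = v <;> simp [h]
  simp only [Submodule.mem_colon_singleton, smul_eq_mul, mul_comm p, mem_srIdeal, support_X_mul,
    Finset.mem_map, addLeftEmbedding_apply, forall_exists_index, and_imp,
    forall_apply_eq_imp_iff₂, hsupp, mem_faceStar]

end FaceComplexes

section MayerVietoris

open CategoryTheory

universe u

variable {R : Type u} [CommRing R]

/-- The complex `R ⧸ A ⊓ B ⟶ R ⧸ A × R ⧸ B ⟶ R ⧸ A ⊔ B`. -/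
def infSupComplex (A B : Ideal R) : ShortComplex (ModuleCat.{u} R) :=
  ShortComplex.mk
    (ModuleCat.ofHom (Y := (R ⧸ A) × (R ⧸ B)) ((Submodule.factor inf_le_left).prod
      (Submodule.factor (p := A ⊓ B) inf_le_right)))
    (ModuleCat.ofHom (Y := R ⧸ A ⊔ B)
      ((Submodule.factor le_sup_left).coprod (-Submodule.factor le_sup_right)))
    (quot_hom_ext fun x => add_neg_cancel (Ideal.Quotient.mk (A ⊔ B) x))

theorem infSupComplex_shortExact (A B : Ideal R) : (infSupComplex A B).ShortExact where
  exact := by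
    rw [ShortComplex.moduleCat_exact_iff]
    rintro ⟨x, y⟩ h
    obtain ⟨x, rfl⟩ := Ideal.Quotient.mk_surjective x
    obtain ⟨y, rfl⟩ := Ideal.Quotient.mk_surjective y
    have hxy : Ideal.Quotient.mk (A ⊔ B) x + -Ideal.Quotient.mk (A ⊔ B) y = 0 := h
    rw [← sub_eq_add_neg, sub_eq_zero, Ideal.Quotient.eq, Submodule.mem_sup] at hxy
    obtain ⟨a, ha, b, hb, hab⟩ := hxy
    refine ⟨Ideal.Quotient.mk (A ⊓ B) (x - a),
      Prod.ext (Ideal.Quotient.eq.2 (by simpa using ha)) (Ideal.Quotient.eq.2 ?_)⟩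
    have hb' : x - a - y = b := by linear_combination -hab
    change x - a - y ∈ B
    rwa [hb']
  mono_f := by
    rw [ModuleCat.mono_iff_injective, injective_iff_map_eq_zero]
    intro x hx
    obtain ⟨x, rfl⟩ := Ideal.Quotient.mk_surjective x
    exact Ideal.Quotient.eq_zero_iff_mem.2 ⟨Ideal.Quotient.eq_zero_iff_mem.1 (congrArg Prod.fst hx),
      Ideal.Quotient.eq_zero_iff_mem.1 (congrArg Prod.snd hx)⟩
  epi_g := by
    rw [ModuleCat.epi_iff_surjective]
    intro y
    obtain ⟨y, rfl⟩ := Ideal.Quotient.mk_surjective y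
    refine ⟨(Ideal.Quotient.mk A y, 0), ?_⟩
    change Ideal.Quotient.mk (A ⊔ B) y + -(0 : R ⧸ A ⊔ B) = Ideal.Quotient.mk (A ⊔ B) y
    rw [neg_zero, add_zero]

theorem infSupComplex_X₂_hasProjectiveDimensionLT {A B : Ideal R} {d : ℕ}
    [HasProjectiveDimensionLT (ModuleCat.of R (R ⧸ A)) d]
    [HasProjectiveDimensionLT (ModuleCat.of R (R ⧸ B)) d] :
    HasProjectiveDimensionLT (infSupComplex A B).X₂ d :=
  hasProjectiveDimensionLT_of_iso
    (ModuleCat.biprodIsoProd (ModuleCat.of R (R ⧸ A)) (ModuleCat.of R (R ⧸ B))) d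

end MayerVietoris

section NonzeroExt

open CategoryTheory Abelian

universe u

variable {σ : Type u} (K : Type u) [CommRing K]

/-- The ideal of the point whose coordinates are `1` on `S` and `0` elsewhere. -/
noncomputable def pointIdeal (S : Set σ) : Ideal (MvPolynomial σ K) :=
  RingHom.ker (aeval (S.indicator fun _ => (1 : K)))

/-- The residue ring `K` at the point whose coordinates are `1` on `S` and `0` elsewhere. -/
noncomputable abbrev pointModule (S : Set σ) : ModuleCat.{u} (MvPolynomial σ K) :=
  ModuleCat.of (MvPolynomial σ K) (MvPolynomial σ K ⧸ pointIdeal K S)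

/-- `Ext^s` from the Stanley–Reisner ring of `Δ` to the residue ring at the indicator of `S` does
not vanish. -/
def NonzeroExt (Δ : LowerSet (Set σ)) (S : Set σ) (s : ℕ) : Prop :=
  ∃ α : Ext (srModule K Δ) (pointModule K S) s, α ≠ 0

variable {K}

theorem X_smul_id_pointModule_of_mem {S : Set σ} {v : σ} (hv : v ∈ S) :
    (X v : MvPolynomial σ K) • 𝟙 (pointModule K S) = 𝟙 _ :=
  quot_hom_ext fun x => Ideal.Quotient.eq.2 (by simp [pointIdeal, hv])

theorem X_smul_id_pointModule_of_notMem {S : Set σ} {v : σ} (hv : v ∉ S) :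
    (X v : MvPolynomial σ K) • 𝟙 (pointModule K S) = 0 :=
  quot_hom_ext fun x => Ideal.Quotient.eq_zero_iff_mem.2 (by simp [pointIdeal, hv])

theorem mk₀_quotMul_comp {R : Type u} [CommRing R] {A : Ideal R} {M : ModuleCat.{u} R} {s : ℕ}
    (r : R) (h : A ≤ A.colon {r}) (α : Ext (ModuleCat.of R (R ⧸ A)) M s) :
    (Ext.mk₀ (quotMul r h)).comp α (zero_add s) = α.comp (Ext.mk₀ (r • 𝟙 M)) (add_zero s) := by
  have : quotMul r h = r • 𝟙 _ :=
    quot_hom_ext fun x => congrArg (Ideal.Quotient.mk A) (mul_comm x r)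
  rw [this, Ext.mk₀_smul, Ext.mk₀_smul, Ext.smul_comp, Ext.comp_smul, Ext.mk₀_id_comp,
    Ext.comp_mk₀_id]

namespace NonzeroExt

variable {Δ Δ' : LowerSet (Set σ)} {S : Set σ} {s d : ℕ}

theorem not_hasProjectiveDimensionLT (h : NonzeroExt K Δ S s) :
    ¬ HasProjectiveDimensionLT (srModule K Δ) s := fun _ =>
  h.elim fun α hα => hα (α.eq_zero_of_hasProjectiveDimensionLT s le_rfl)

theorem top [Nontrivial K] (S : Set σ) : NonzeroExt K ⊤ S 0 := by
  have h0 : srIdeal K ⊤ ≤ pointIdeal K S := srIdeal_top (K := K) ▸ bot_le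
  refine ⟨Ext.mk₀ (quotFactor h0), fun h => ?_⟩
  have hzero : quotFactor h0 = 0 := (Ext.mk₀_bijective _ _).1 (h.trans (Ext.mk₀_zero _ _).symm)
  have hone : Ideal.Quotient.mk (pointIdeal K S) 1 = 0 :=
    congrArg (fun g => g.hom (Ideal.Quotient.mk _ 1)) hzero
  rw [Ideal.Quotient.eq_zero_iff_mem, pointIdeal, RingHom.mem_ker, map_one] at hone
  exact one_ne_zero hone

/-- Multiplication by `X v` maps the Stanley–Reisner ring of the star of `v` to that of `Δ`, and
acts on the residue ring as the identity. -/
theorem of_faceStar_singleton {v : σ} (hv : v ∈ S) (h : NonzeroExt K (faceStar Δ {v}) S s) :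
    NonzeroExt K Δ S s := by
  obtain ⟨α, hα⟩ := h
  have hcolon := srIdeal_faceStar_singleton (K := K) Δ v
  have hle : srIdeal K Δ ≤ srIdeal K (faceStar Δ {v}) := hcolon ▸ Ideal.le_colon
  refine ⟨(Ext.mk₀ (quotFactor hle)).comp α (zero_add s), fun h0 => hα ?_⟩
  have hX : quotMul (X v) hcolon.le ≫ quotFactor hle = quotMul (X v) Ideal.le_colon :=
    quot_hom_ext fun _ => rfl
  calc α = (Ext.mk₀ (quotMul (X v) Ideal.le_colon)).comp α (zero_add s) := by
        rw [mk₀_quotMul_comp, X_smul_id_pointModule_of_mem hv, Ext.comp_mk₀_id]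
    _ = 0 := by rw [← hX, ← Ext.mk₀_comp_mk₀_assoc, h0, Ext.comp_zero]

theorem of_faceStar {T : Finset σ} (hT : ↑T ⊆ S) (h : NonzeroExt K (faceStar Δ T) S s) :
    NonzeroExt K Δ S s := by
  classical
  induction T using Finset.induction_on generalizing Δ with
  | empty =>
    rwa [show faceStar Δ (↑(∅ : Finset σ)) = Δ from
      LowerSet.ext (by ext; simp [mem_faceStar])] at h
  | insert v T _ ih =>
    rw [Finset.coe_insert, Set.insert_subset_iff] at hT
    refine of_faceStar_singleton hT.1 (ih hT.2 ?_)
    rwa [show faceStar (faceStar Δ {v}) T = faceStar Δ ↑(insert v T) from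
      LowerSet.ext (by ext; simp [mem_faceStar, Set.insert_union])]

/-- Since `Δ` is a cone over `v`, the element `X v` is regular on its Stanley–Reisner ring, and it
acts on the residue ring as zero. -/
theorem inf_avoiding_singleton {v : σ} (hΔ : faceStar Δ {v} = Δ) (hv : v ∉ S)
    (h : NonzeroExt K Δ S s) : NonzeroExt K (Δ ⊓ avoiding {v}) S (s + 1) := by
  have hcolon := srIdeal_faceStar_singleton (K := K) Δ v
  rw [hΔ] at hcolon
  obtain ⟨α, hα⟩ := h
  have hS := colonComplex_shortExact hcolon
  unfold NonzeroExt srModule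
  rw [srIdeal_inf, srIdeal_avoiding_singleton]
  refine ⟨hS.extClass.comp α (add_comm 1 s), fun h0 => hα ?_⟩
  obtain ⟨β, rfl⟩ := Ext.contravariant_sequence_exact₁ hS _ α (add_comm 1 s) h0
  refine (mk₀_quotMul_comp (X v) hcolon.le β).trans ?_
  rw [X_smul_id_pointModule_of_notMem hv, Ext.mk₀_zero]
  exact Ext.comp_zero β _ _ _ _

theorem sup (h : NonzeroExt K (Δ ⊓ Δ') S (d + 1))
    (hΔ : HasProjectiveDimensionLT (srModule K Δ) (d + 1))
    (hΔ' : HasProjectiveDimensionLT (srModule K Δ') (d + 1)) : NonzeroExt K (Δ ⊔ Δ') S d := by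
  unfold NonzeroExt srModule at h ⊢
  rw [srIdeal_inf] at h
  rw [srIdeal_sup]
  have hS := infSupComplex_shortExact (srIdeal K Δ) (srIdeal K Δ')
  obtain ⟨α, hα⟩ := h
  have := infSupComplex_X₂_hasProjectiveDimensionLT (d := d + 1) (A := srIdeal K Δ)
    (B := srIdeal K Δ')
  obtain ⟨β, hβ⟩ := Ext.contravariant_sequence_exact₃ hS _ α
    (Ext.eq_zero_of_hasProjectiveDimensionLT _ (d + 1) le_rfl) (add_comm 1 d)
  refine ⟨β, fun h0 => hα ?_⟩
  rw [← hβ, h0]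
  exact Ext.comp_zero hS.extClass _ _ _ _

end NonzeroExt
end NonzeroExt

section WalkComplex

universe u

variable {σ : Type u} {F : Set σ} {a b c : σ} {l l' : List σ}

/-- The sets of vertices containing no two consecutive entries of `l`: the independence complex of
the graph whose edges are the steps of the walk `l`. -/
def walkComplex (l : List σ) : LowerSet (Set σ) where
  carrier := {F | l.IsChain fun a b => ¬ (a ∈ F ∧ b ∈ F)}
  lower' _ _ h hF := hF.imp fun _ _ hab hA => hab ⟨h hA.1, h hA.2⟩

/-- The independence complex of the cycle with vertices `a` and the entries of `t`, in order. -/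
abbrev cycleComplex (a : σ) (t : List σ) : LowerSet (Set σ) :=
  walkComplex (a :: (t ++ [a]))

theorem mem_walkComplex : F ∈ walkComplex l ↔ l.IsChain fun a b => ¬ (a ∈ F ∧ b ∈ F) := Iff.rfl

theorem mem_walkComplex_singleton : F ∈ walkComplex [a] :=
  List.isChain_singleton a

theorem mem_walkComplex_cons_cons :
    F ∈ walkComplex (a :: b :: l) ↔ ¬ (a ∈ F ∧ b ∈ F) ∧ F ∈ walkComplex (b :: l) :=
  List.isChain_cons_cons

theorem mem_walkComplex_cons_append_cons :
    F ∈ walkComplex (a :: (l ++ c :: l')) ↔ F ∈ walkComplex (a :: l) ∧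
      ¬ ((a :: l).getLast (List.cons_ne_nil a l) ∈ F ∧ c ∈ F) ∧ F ∈ walkComplex (c :: l') := by
  induction l generalizing a with
  | nil => simp [mem_walkComplex_cons_cons, mem_walkComplex_singleton]
  | cons b l ih =>
    simp only [List.cons_append, mem_walkComplex_cons_cons, ih, and_assoc,
      List.getLast_cons_cons]

theorem mem_walkComplex_cons_of_notMem (ha : a ∉ F) :
    F ∈ walkComplex (a :: l) ↔ F ∈ walkComplex l := by
  cases l with
  | nil => exact iff_of_true mem_walkComplex_singleton List.isChain_nil
  | cons b l => rw [mem_walkComplex_cons_cons, and_iff_right fun h => ha h.1]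

theorem mem_cycleComplex {t : List σ} :
    F ∈ cycleComplex a t ↔
      F ∈ walkComplex (a :: t) ∧ ¬ ((a :: t).getLast (List.cons_ne_nil a t) ∈ F ∧ a ∈ F) := by
  simp only [cycleComplex, mem_walkComplex_cons_append_cons, mem_walkComplex_singleton, and_true]

theorem walkComplex_reverse (l : List σ) : walkComplex l.reverse = walkComplex l :=
  LowerSet.ext <| Set.ext fun F => by
    simp only [SetLike.mem_coe, mem_walkComplex, List.isChain_reverse, and_comm]

theorem mem_walkComplex_congr {F' : Set σ} (h : ∀ v ∈ l, v ∈ F ↔ v ∈ F') :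
    F ∈ walkComplex l ↔ F' ∈ walkComplex l := by
  simp only [mem_walkComplex, List.isChain_iff_getElem]
  exact forall₂_congr fun i hi => by rw [h _ (List.getElem_mem _), h _ (List.getElem_mem _)]

end WalkComplex

section CutsOut

open CategoryTheory

universe u

variable {σ : Type u} (K : Type u) [CommRing K]

/-- There are `s` polynomials in the Stanley–Reisner ideal of `Δ` such that for each prime ideal
containing them, the set of variables outside this prime ideal satisfies `Q`. -/
def CutsOut (Δ : LowerSet (Set σ)) (Q : Set σ → Prop) (s : ℕ) : Prop :=
  ∃ f : Fin s → MvPolynomial σ K, (∀ i, f i ∈ srIdeal K Δ) ∧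
    ∀ P : Ideal (MvPolynomial σ K), P.IsPrime → (∀ i, f i ∈ P) → Q {v | X v ∉ P}

variable {K} {Δ : LowerSet (Set σ)}

theorem X_mul_X_mem_srIdeal {a b : σ} (h : ∀ F ∈ Δ, ¬ (a ∈ F ∧ b ∈ F)) :
    (X a * X b : MvPolynomial σ K) ∈ srIdeal K Δ := by
  classical
  rw [X, X, monomial_mul]
  exact monomial_mem_srIdeal (fun hF => h _ hF (by simp)) _

theorem X_mul_X_mem_iff {P : Ideal (MvPolynomial σ K)} (hP : P.IsPrime) {a b : σ} :
    X a * X b ∈ P ↔ ¬ (a ∈ {v | X v ∉ P} ∧ b ∈ {v | X v ∉ P}) := by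
  rw [hP.mul_mem_iff_mem_or_mem, Set.mem_ofPred_eq, Set.mem_ofPred_eq]
  tauto

theorem srIdeal_le_of_setOf_X_notMem_mem {P : Ideal (MvPolynomial σ K)}
    (h : {v | X v ∉ P} ∈ Δ) : srIdeal K Δ ≤ P := by
  refine srIdeal_le_iff.2 fun m hm => ?_
  obtain ⟨v, hv, hvP⟩ := Set.not_subset.1 fun hs => hm (Δ.lower hs h)
  rw [Set.mem_ofPred_eq, not_not] at hvP
  exact P.mem_of_dvd (X_dvd_monomial.2 (Or.inr (Finsupp.mem_support_iff.1 hv))) hvP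

namespace CutsOut

variable {Q Q' : Set σ → Prop} {s s' : ℕ} {a b c d : σ}

theorem mono (h : CutsOut K Δ Q s) (hQ : ∀ F, Q F → Q' F) : CutsOut K Δ Q' s := by
  obtain ⟨f, hf, h⟩ := h
  exact ⟨f, hf, fun P hP hfP => hQ _ (h P hP hfP)⟩

theorem and (h : CutsOut K Δ Q s) (h' : CutsOut K Δ Q' s') :
    CutsOut K Δ (fun F => Q F ∧ Q' F) (s + s') := by
  obtain ⟨f, hf, h⟩ := h
  obtain ⟨f', hf', h'⟩ := h'
  refine ⟨Fin.append f f', Fin.addCases (by simpa using hf) (by simpa using hf'),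
    fun P hP hfP => ⟨h P hP fun i => ?_, h' P hP fun i => ?_⟩⟩
  · simpa using hfP (Fin.castAdd s' i)
  · simpa using hfP (Fin.natAdd s i)

theorem of_forall (h : ∀ F, Q F) : CutsOut K Δ Q 0 :=
  ⟨Fin.elim0, fun i => i.elim0, fun _ _ _ => h _⟩

theorem vertices {w : List σ} (h : ∀ F ∈ Δ, ∀ v ∈ w, v ∉ F) :
    CutsOut K Δ (fun F => ∀ v ∈ w, v ∉ F) w.length := by
  refine ⟨fun i => X w[i], fun i => monomial_mem_srIdeal (fun hF => ?_) 1, fun P _ hf v hv => ?_⟩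
  · exact h _ hF _ (List.getElem_mem i.2) (by simp)
  · obtain ⟨i, hi, rfl⟩ := List.mem_iff_getElem.1 hv
    exact not_not.2 (hf ⟨i, hi⟩)

theorem edge (h : ∀ F ∈ Δ, ¬ (a ∈ F ∧ b ∈ F)) : CutsOut K Δ (fun F => ¬ (a ∈ F ∧ b ∈ F)) 1 :=
  ⟨fun _ => X a * X b, fun _ => X_mul_X_mem_srIdeal h,
    fun _ hP hf => (X_mul_X_mem_iff hP).1 (hf 0)⟩

theorem edge_add_edge (h : ∀ F ∈ Δ, ¬ (a ∈ F ∧ b ∈ F)) (h' : ∀ F ∈ Δ, ¬ (c ∈ F ∧ d ∈ F)) :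
    CutsOut K Δ (fun F => a ∈ F ∧ b ∈ F ↔ c ∈ F ∧ d ∈ F) 1 := by
  refine ⟨fun _ => X a * X b + X c * X d,
    fun _ => Ideal.add_mem _ (X_mul_X_mem_srIdeal h) (X_mul_X_mem_srIdeal h'),
    fun P hP hf => ?_⟩
  beta_reduce
  rw [← not_iff_not, ← X_mul_X_mem_iff hP, ← X_mul_X_mem_iff hP]
  exact ⟨fun hab => (Ideal.add_mem_iff_right _ hab).1 (hf 0),
    fun hcd => (Ideal.add_mem_iff_left _ hcd).1 (hf 0)⟩

theorem exists_radical_eq (h : CutsOut K Δ (· ∈ Δ) s) :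
    ∃ f : Fin s → MvPolynomial σ K,
      (Ideal.span (Set.range f)).radical = (srIdeal K Δ).radical := by
  obtain ⟨f, hf, h⟩ := h
  refine ⟨f, le_antisymm (Ideal.radical_mono ?_) ?_⟩
  · rwa [Ideal.span_le, Set.range_subset_iff]
  · rw [Ideal.radical_eq_sInf (Ideal.span _)]
    refine le_sInf fun P ⟨hfP, hP⟩ => hP.radical_le_iff.2 (srIdeal_le_of_setOf_X_notMem_mem ?_)
    exact h P hP fun i => hfP (Ideal.subset_span ⟨i, rfl⟩)

theorem hasProjectiveDimensionLT [Finite σ] [IsNoetherianRing K] (h : CutsOut K Δ (· ∈ Δ) s)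
    (hs : s ≤ s') : HasProjectiveDimensionLT (srModule K Δ) (s' + 1) := by
  obtain ⟨f, hf⟩ := h.exists_radical_eq
  have := hasProjectiveDimensionLT_of_radical_eq f hf
  exact hasProjectiveDimensionLT_of_ge _ (s + 1) (s' + 1) (Nat.succ_le_succ hs)

theorem path {l : List σ} {j : ℕ} (hl : l.length = 3 * j + 1)
    (h : ∀ F ∈ Δ, F ∈ walkComplex l) : CutsOut K Δ (· ∈ walkComplex l) (2 * j) := by
  induction j generalizing l with
  | zero =>
    match l, hl with
    | [a], _ => exact of_forall fun F => mem_walkComplex_singleton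
  | succ j ih =>
    match l, hl with
    | a :: b :: c :: d :: l, hl =>
      simp only [mem_walkComplex_cons_cons] at h
      have hbc : CutsOut K Δ (fun F => ¬ (b ∈ F ∧ c ∈ F)) 1 := edge fun F hF => (h F hF).2.1
      have hab_cd : CutsOut K Δ (fun F => a ∈ F ∧ b ∈ F ↔ c ∈ F ∧ d ∈ F) 1 :=
        edge_add_edge (fun F hF => (h F hF).1) fun F hF => (h F hF).2.2.1
      have htail := ih (l := d :: l) (by simp at hl ⊢; omega) fun F hF => (h F hF).2.2.2
      rw [show 2 * (j + 1) = 1 + 1 + 2 * j by ring]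
      refine ((hbc.and hab_cd).and htail).mono fun F => ?_
      simp only [mem_walkComplex_cons_cons]
      tauto

end CutsOut
end CutsOut

section Cycle

open CategoryTheory

universe u

variable {σ : Type u} {K : Type u} [CommRing K] {S : Set σ}

theorem nonzeroExt_avoiding [Nontrivial K] {w : List σ} (hw : w.Nodup) (hwS : ∀ v ∈ w, v ∉ S) :
    NonzeroExt K (avoiding {v | v ∈ w}) S w.length := by
  induction w with
  | nil =>
    rw [show avoiding {v | v ∈ ([] : List σ)} = ⊤ from
      LowerSet.ext (by ext; simp [mem_avoiding])]
    exact .top S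
  | cons v w ih =>
    rw [List.nodup_cons] at hw
    rw [List.forall_mem_cons] at hwS
    have hcone : faceStar (avoiding {u | u ∈ w}) {v} = avoiding {u | u ∈ w} := by
      ext F
      simp only [SetLike.mem_coe, mem_faceStar, mem_avoiding]
      grind
    rw [show avoiding {u | u ∈ v :: w} = avoiding {u | u ∈ w} ⊓ avoiding {v} from
      LowerSet.ext (by ext; simp [mem_avoiding, and_comm])]
    exact (ih hw.2 hwS.2).inf_avoiding_singleton hcone hwS.1

variable {a p q r : σ} {t w : List σ}

theorem mem_cycleComplex_append_three {F : Set σ} :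
    F ∈ cycleComplex a (t ++ [r, q, p]) ↔
      F ∈ walkComplex (a :: t) ∧ ¬ ((a :: t).getLast (List.cons_ne_nil a t) ∈ F ∧ r ∈ F) ∧
        ¬ (r ∈ F ∧ q ∈ F) ∧ ¬ (q ∈ F ∧ p ∈ F) ∧ ¬ (p ∈ F ∧ a ∈ F) := by
  simp only [cycleComplex, List.append_assoc, List.cons_append, List.nil_append,
    mem_walkComplex_cons_append_cons, mem_walkComplex_cons_cons, mem_walkComplex_singleton,
    and_true]

/-- A face of the cycle `a, t, r, q, p` either avoids both `p` and `r`, or avoids `q` and is also a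
face of the cycle `a, t`. -/
theorem avoiding_inf_cycleComplex_eq_sup :
    avoiding {v | v ∈ w} ⊓ cycleComplex a (t ++ [r, q, p]) =
      (avoiding {v | v ∈ p :: r :: w} ⊓ walkComplex (a :: t)) ⊔
      (avoiding {v | v ∈ q :: w} ⊓ cycleComplex a (t ++ [r, q, p]) ⊓ cycleComplex a t) := by
  ext F
  simp only [LowerSet.coe_inf, LowerSet.coe_sup, Set.mem_inter_iff, Set.mem_union,
    SetLike.mem_coe, mem_avoiding, Set.mem_ofPred_eq, List.forall_mem_cons,
    mem_cycleComplex_append_three]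
  simp only [mem_cycleComplex]
  grind

theorem avoiding_inf_cycleComplex_eq_inf :
    avoiding {v | v ∈ q :: p :: r :: w} ⊓ cycleComplex a t =
      (avoiding {v | v ∈ p :: r :: w} ⊓ walkComplex (a :: t)) ⊓
      (avoiding {v | v ∈ q :: w} ⊓ cycleComplex a (t ++ [r, q, p]) ⊓ cycleComplex a t) := by
  ext F
  simp only [LowerSet.coe_inf, Set.mem_inter_iff, SetLike.mem_coe, mem_avoiding,
    Set.mem_ofPred_eq, List.forall_mem_cons, mem_cycleComplex_append_three]
  simp only [mem_cycleComplex]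
  grind

namespace CutsOut

theorem avoiding_inf_path {Δ : LowerSet (Set σ)} {j : ℕ} (ht : t.length = 3 * j)
    (h : Δ ≤ avoiding {v | v ∈ w} ⊓ walkComplex (a :: t)) :
    CutsOut K Δ (· ∈ avoiding {v | v ∈ w} ⊓ walkComplex (a :: t)) (w.length + 2 * j) :=
  ((vertices fun _ hF => mem_avoiding.1 (h hF).1).and
    (path (by simpa using ht) fun _ hF => (h hF).2)).mono fun _ hF =>
      ⟨mem_avoiding.2 hF.1, hF.2⟩

/-- The sum `X a * X p + X b * X r`, where `b` precedes `r` in the cycle, replaces two edges in the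
presence of the edge `X b * X a` of the shorter cycle. -/
theorem avoiding_inf_cycleComplex_inf {j : ℕ} (ht : t.length = 3 * j) :
    CutsOut K (avoiding {v | v ∈ q :: w} ⊓ cycleComplex a (t ++ [r, q, p]) ⊓ cycleComplex a t)
      (· ∈ avoiding {v | v ∈ q :: w} ⊓ cycleComplex a (t ++ [r, q, p]) ⊓ cycleComplex a t)
      (w.length + 2 * j + 3) := by
  set b := (a :: t).getLast (List.cons_ne_nil a t) with hb
  have key (F : Set σ) :
      F ∈ avoiding {v | v ∈ q :: w} ⊓ cycleComplex a (t ++ [r, q, p]) ⊓ cycleComplex a t ↔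
        F ∈ avoiding {v | v ∈ q :: w} ⊓ walkComplex (a :: t) ∧
          ¬ (b ∈ F ∧ a ∈ F) ∧ ¬ (a ∈ F ∧ p ∈ F) ∧ ¬ (b ∈ F ∧ r ∈ F) := by
    simp only [LowerSet.mem_inf_iff, mem_avoiding, Set.mem_ofPred_eq, List.forall_mem_cons,
      mem_cycleComplex_append_three, ← hb]
    rw [mem_cycleComplex, ← hb]
    grind
  have hba := edge (K := K) fun F hF => ((key F).1 hF).2.1
  have hap_br := edge_add_edge (K := K) (fun F hF => ((key F).1 hF).2.2.1)
    fun F hF => ((key F).1 hF).2.2.2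
  rw [show w.length + 2 * j + 3 = (q :: w).length + 2 * j + (1 + 1) by
    rw [List.length_cons]; ring]
  refine ((avoiding_inf_path ht fun F hF => ((key F).1 hF).1).and (hba.and hap_br)).mono
    fun F hF => (key F).2 ?_
  tauto

end CutsOut

namespace NonzeroExt

theorem avoiding_inf_cycleComplex [Finite σ] [IsNoetherianRing K] [Nontrivial K] {j : ℕ}
    (ht : t.length = 3 * j) (hnd : (w ++ a :: t).Nodup) (hS : ∀ v ∈ w ++ a :: t, v ∉ S) :
    NonzeroExt K (avoiding {v | v ∈ w} ⊓ cycleComplex a t) S (w.length + 2 * j + 1) := by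
  induction j generalizing w t with
  | zero =>
    obtain rfl : t = [] := List.eq_nil_of_length_eq_zero ht
    have hloop : avoiding {v | v ∈ w} ⊓ cycleComplex a [] = avoiding {v | v ∈ w ++ [a]} := by
      ext F
      simp only [cycleComplex, List.nil_append, LowerSet.coe_inf, Set.mem_inter_iff,
        SetLike.mem_coe, mem_avoiding, Set.mem_ofPred_eq, mem_walkComplex_cons_cons,
        mem_walkComplex_singleton, List.mem_append, List.mem_singleton]
      grind
    rw [hloop]
    simpa using nonzeroExt_avoiding (K := K) hnd hS
  | succ j ih =>
    obtain ⟨t, r, q, p, rfl⟩ : ∃ t' r q p, t = t' ++ [r, q, p] := by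
      obtain ⟨r, q, p, hrqp⟩ := List.length_eq_three.1
        (show (t.drop (3 * j)).length = 3 by rw [List.length_drop]; omega)
      exact ⟨t.take (3 * j), r, q, p, by rw [← hrqp, List.take_append_drop]⟩
    replace ht : t.length = 3 * j := by simpa [mul_add] using ht
    have hperm : (q :: p :: r :: w ++ a :: t).Perm (w ++ a :: (t ++ [r, q, p])) := by
      classical
      simp only [List.perm_iff_count, List.cons_append, List.count_cons, List.count_append,
        List.count_nil]
      omega
    have hinf := ih (w := q :: p :: r :: w) ht (hperm.nodup_iff.2 hnd)
      fun v hv => hS v (hperm.mem_iff.1 hv)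
    rw [avoiding_inf_cycleComplex_eq_inf] at hinf
    rw [avoiding_inf_cycleComplex_eq_sup]
    rw [show (q :: p :: r :: w).length + 2 * j + 1 = w.length + 2 * (j + 1) + 1 + 1 by
      simp only [List.length_cons]; ring] at hinf
    refine hinf.sup ?_ ?_
    · exact (CutsOut.avoiding_inf_path ht le_rfl).hasProjectiveDimensionLT
        (by simp only [List.length_cons]; omega)
    · exact (CutsOut.avoiding_inf_cycleComplex_inf ht).hasProjectiveDimensionLT
        (by omega)

end NonzeroExt

end Cycle

section Domination

universe u

variable {σ : Type u} {K : Type u} [CommRing K]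

/-- The set `S` consists of every third entry of `l`; the remaining entries of `l` are then adjacent
to `S` or to one of the ends `a`, `d` of the walk. -/
theorem exists_dominating_interior : ∀ {l : List σ}, l ≠ [] → l.Nodup →
    ∃ S : Finset σ, (∀ v ∈ S, v ∈ l) ∧ S.card = l.length / 3 ∧
      ∀ F : Set σ, ↑S ⊆ F → ∀ a d, a ∈ F → (l.length % 3 = 2 → d ∈ F) →
        (F ∈ walkComplex (a :: (l ++ [d])) ↔ ∀ v ∈ l, v ∈ F → v ∈ S)
  | [b], _, _ => ⟨∅, by simp, by simp, fun F _ a d ha _ => by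
      simp +contextual [mem_walkComplex_cons_cons, mem_walkComplex_singleton, ha]⟩
  | [b, c], _, _ => ⟨∅, by simp, by simp, fun F _ a d ha hd => by
      simp +contextual [mem_walkComplex_cons_cons, mem_walkComplex_singleton, ha, hd rfl]⟩
  | [b, c, e], _, hnd => ⟨{c}, by simp, by simp, fun F hF a d ha _ => by
      have hc : c ∈ F := hF (by simp)
      simp only [List.cons_append, List.nil_append, mem_walkComplex_cons_cons,
        mem_walkComplex_singleton]
      grind⟩
  | b :: c :: e :: f :: l, _, hnd => by
      classical
      obtain ⟨S, hSl, hcard, hS⟩ :=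
        exists_dominating_interior (List.cons_ne_nil f l) (by grind)
      refine ⟨insert e S, by grind, ?_, fun F hF a d ha hd => ?_⟩
      · rw [Finset.card_insert_of_notMem (by grind), hcard]
        simp only [List.length_cons]
        omega
      · have he : e ∈ F := hF (by simp)
        have htail := hS F (fun v hv => hF (by simp [hv])) e d he (by grind)
        simp only [List.cons_append, mem_walkComplex_cons_cons] at htail ⊢
        grind

theorem exists_dominating_path {l : List σ} (hnd : l.Nodup) (hl : l.length % 3 = 0) :
    ∃ S : Finset σ, (∀ v ∈ S, v ∈ l) ∧ S.card = l.length / 3 ∧ (∀ a ∈ l.head?, a ∉ S) ∧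
      ∀ F : Set σ, ↑S ⊆ F → ∀ d, F ∈ walkComplex (l ++ [d]) ↔ ∀ v ∈ l, v ∈ F → v ∈ S := by
  classical
  match l, hnd, hl with
  | [], _, _ => exact ⟨∅, by simp, by simp, by simp, by simp [mem_walkComplex_singleton]⟩
  | a :: b :: c :: l, hnd, hl =>
    simp only [List.length_cons] at hl
    obtain ⟨S, hSl, hcard, hS⟩ := exists_dominating_interior (List.cons_ne_nil c l) (by grind)
    refine ⟨insert b S, by grind, ?_, ?_, fun F hF d => ?_⟩
    · rw [Finset.card_insert_of_notMem (by grind), hcard]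
      simp only [List.length_cons]
      omega
    · grind
    · have hb : b ∈ F := hF (by simp)
      have htail := hS F (fun v hv => hF (by simp [hv])) b d hb (by grind)
      rw [List.cons_append, List.cons_append, mem_walkComplex_cons_cons, htail]
      grind

theorem length_filter_notMem [DecidableEq σ] {V : List σ} (hV : V.Nodup) {T : Finset σ}
    (hT : ∀ v ∈ T, v ∈ V) : (V.filter (· ∉ T)).length = V.length - T.card := by
  rw [← List.toFinset_card_of_nodup (hV.filter _), ← List.toFinset_card_of_nodup hV,
    ← Finset.card_sdiff_of_subset fun v hv => List.mem_toFinset.2 (hT v hv)]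
  congr 1
  ext v
  simp

namespace NonzeroExt

variable [Nontrivial K] {Δ : LowerSet (Set σ)} {V : List σ} {T : Finset σ}

theorem of_facet (hV : V.Nodup) (hT : ∀ v ∈ T, v ∈ V)
    (h : ∀ F : Set σ, ↑T ⊆ F → (F ∈ Δ ↔ ∀ v ∈ V, v ∈ F → v ∈ T)) :
    NonzeroExt K Δ T (V.length - T.card) := by
  classical
  have hstar : faceStar Δ T = avoiding {v | v ∈ V.filter (· ∉ T)} := by
    ext F
    simp only [SetLike.mem_coe, mem_faceStar, h _ Set.subset_union_left, mem_avoiding,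
      Set.mem_ofPred_eq, List.mem_filter, decide_eq_true_eq, Set.mem_union]
    grind
  rw [← length_filter_notMem hV hT]
  exact of_faceStar subset_rfl (hstar ▸ nonzeroExt_avoiding (hV.filter _) (by simp))

end NonzeroExt

/-- The independence complex of the graph consisting of the cycles with vertices `y, ys` and
`x, xs`, joined by the path `x, zs, y`. -/
def joinComplex (y : σ) (ys : List σ) (x : σ) (xs zs : List σ) : LowerSet (Set σ) :=
  cycleComplex y ys ⊓ cycleComplex x xs ⊓ walkComplex (x :: (zs ++ [y]))

variable {y x : σ} {ys xs zs : List σ}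

theorem mem_joinComplex {F : Set σ} : F ∈ joinComplex y ys x xs zs ↔
    F ∈ cycleComplex y ys ∧ F ∈ cycleComplex x xs ∧ F ∈ walkComplex (x :: (zs ++ [y])) :=
  and_assoc

theorem joinComplex_swap : joinComplex y ys x xs zs = joinComplex x xs y ys zs.reverse := by
  rw [joinComplex, joinComplex, inf_comm (cycleComplex y ys),
    show y :: (zs.reverse ++ [x]) = (x :: (zs ++ [y])).reverse by simp, walkComplex_reverse]

theorem exists_nonzeroExt_joinComplex [Nontrivial K] (hnd : (y :: ys ++ (x :: xs ++ zs)).Nodup)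
    (hys : ys ≠ []) (hxs : xs ≠ []) (hzs : zs ≠ []) :
    ∃ S, NonzeroExt K (joinComplex y ys x xs zs) S
      (ys.length + xs.length + zs.length - (ys.length / 3 + xs.length / 3 + zs.length / 3)) := by
  classical
  obtain ⟨S₁, hS₁, hcard₁, h₁⟩ := exists_dominating_interior hys (by grind)
  obtain ⟨S₂, hS₂, hcard₂, h₂⟩ := exists_dominating_interior hxs (by grind)
  obtain ⟨S₃, hS₃, hcard₃, h₃⟩ := exists_dominating_interior hzs (by grind)
  have hdisj : Disjoint (S₁ ∪ S₂) S₃ ∧ Disjoint S₁ S₂ := by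
    simp only [Finset.disjoint_left, Finset.mem_union]
    grind
  have hxy : y ∉ S₁ ∪ S₂ ∪ S₃ ∧ x ∉ insert y (S₁ ∪ S₂ ∪ S₃) := by
    simp only [Finset.mem_insert, Finset.mem_union]
    grind
  have hfacet := NonzeroExt.of_facet (K := K) (Δ := joinComplex y ys x xs zs) hnd
    (T := insert x (insert y (S₁ ∪ S₂ ∪ S₃)))
    (by simp only [Finset.mem_insert, Finset.mem_union]; grind) fun F hF => by
      simp only [Finset.coe_insert, Finset.coe_union, Set.insert_subset_iff,
        Set.union_subset_iff] at hF
      obtain ⟨hx, hy, ⟨hF₁, hF₂⟩, hF₃⟩ := hF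
      rw [mem_joinComplex, h₁ F hF₁ y y hy fun _ => hy, h₂ F hF₂ x x hx fun _ => hx,
        h₃ F hF₃ x y hx fun _ => hy]
      simp only [Finset.mem_insert, Finset.mem_union]
      grind
  rw [Finset.card_insert_of_notMem hxy.2, Finset.card_insert_of_notMem hxy.1,
    Finset.card_union_of_disjoint hdisj.1, Finset.card_union_of_disjoint hdisj.2, hcard₁, hcard₂,
    hcard₃] at hfacet
  have hdeg : (y :: ys ++ (x :: xs ++ zs)).length -
      (ys.length / 3 + xs.length / 3 + zs.length / 3 + 1 + 1) =
      ys.length + xs.length + zs.length - (ys.length / 3 + xs.length / 3 + zs.length / 3) := by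
    simp only [List.length_append, List.length_cons]
    omega
  exact ⟨_, hdeg ▸ hfacet⟩

theorem exists_dominating_tadpole (hnd : (x :: xs ++ zs).Nodup) (hxs : xs ≠ []) (hzs : zs ≠ [])
    (hmod : (xs.length + 1 + zs.length) % 3 = 0) :
    ∃ S : Finset σ, (∀ v ∈ S, v ∈ x :: xs ++ zs) ∧ S.card = (xs.length + 1 + zs.length) / 3 ∧
      ∀ F : Set σ, ↑S ⊆ F → ∀ y, (F ∈ cycleComplex x xs ∧ F ∈ walkComplex (x :: (zs ++ [y])) ↔
        ∀ v ∈ x :: xs ++ zs, v ∈ F → v ∈ S) := by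
  classical
  by_cases hz : zs.length % 3 = 2
  · obtain ⟨S₂, hS₂, hcard₂, -, h₂⟩ := exists_dominating_path (l := xs) (by grind) (by omega)
    obtain ⟨S₃, hS₃, hcard₃, hx₃, h₃⟩ :=
      exists_dominating_path (l := x :: zs) (by grind) (by grind)
    have hdisj : Disjoint S₂ S₃ := Finset.disjoint_left.2 (by grind)
    refine ⟨S₂ ∪ S₃, by grind, ?_, fun F hF y => ?_⟩
    · rw [Finset.card_union_of_disjoint hdisj, hcard₂, hcard₃, List.length_cons]
      omega
    · rw [Finset.coe_union, Set.union_subset_iff] at hF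
      have hx : x ∉ S₃ := hx₃ x rfl
      rw [← List.cons_append, h₃ F hF.2]
      by_cases hxF : x ∈ F
      · grind
      · rw [mem_walkComplex_cons_of_notMem hxF, h₂ F hF.1]
        grind
  · obtain ⟨S₂, hS₂, hcard₂, h₂⟩ := exists_dominating_interior hxs (by grind)
    obtain ⟨S₃, hS₃, hcard₃, h₃⟩ := exists_dominating_interior hzs (by grind)
    have hdisj : Disjoint S₂ S₃ := Finset.disjoint_left.2 (by grind)
    refine ⟨insert x (S₂ ∪ S₃), by grind, ?_, fun F hF y => ?_⟩
    · rw [Finset.card_insert_of_notMem (by grind), Finset.card_union_of_disjoint hdisj, hcard₂,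
        hcard₃]
      omega
    · rw [Finset.coe_insert, Finset.coe_union, Set.insert_subset_iff, Set.union_subset_iff] at hF
      rw [h₂ F hF.2.1 x x hF.1 fun _ => hF.1, h₃ F hF.2.2 x y hF.1 (by tauto)]
      grind

theorem exists_nonzeroExt_joinComplex_of_mod_eq_zero [Finite σ] [IsNoetherianRing K] [Nontrivial K]
    (hnd : (y :: ys ++ (x :: xs ++ zs)).Nodup) (hys : ys.length % 3 = 0) (hxs : xs ≠ [])
    (hzs : zs ≠ []) (hmod : (xs.length + 1 + zs.length) % 3 = 0) :
    ∃ S, NonzeroExt K (joinComplex y ys x xs zs) S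
      (2 * (ys.length + (xs.length + 1 + zs.length)) / 3 + 1) := by
  classical
  have hV : (x :: xs ++ zs).Nodup := hnd.of_append_right
  obtain ⟨T, hT, hcard, h⟩ := exists_dominating_tadpole hV hxs hzs hmod
  set w := (x :: xs ++ zs).filter (· ∉ T)
  have hw : w.length = 2 * ((xs.length + 1 + zs.length) / 3) := by
    rw [length_filter_notMem hV hT, hcard]
    simp only [List.length_append, List.length_cons]
    omega
  have hstar : faceStar (joinComplex y ys x xs zs) T =
      avoiding {v | v ∈ w} ⊓ cycleComplex y ys := by
    ext F
    have hcycle : ↑T ∪ F ∈ cycleComplex y ys ↔ F ∈ cycleComplex y ys :=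
      mem_walkComplex_congr (by grind)
    simp only [SetLike.mem_coe, mem_faceStar, mem_joinComplex, hcycle,
      h _ Set.subset_union_left, LowerSet.mem_inf_iff, mem_avoiding]
    grind
  have hcycle := NonzeroExt.avoiding_inf_cycleComplex (K := K) (S := T) (w := w) (a := y) (t := ys)
    (j := ys.length / 3) (by omega) (by grind) (by grind)
  have hdeg : w.length + 2 * (ys.length / 3) + 1 =
      2 * (ys.length + (xs.length + 1 + zs.length)) / 3 + 1 := by omega
  exact ⟨T, .of_faceStar subset_rfl (hstar ▸ hdeg ▸ hcycle)⟩

theorem exists_nonzeroExt_joinComplex_of_not [Finite σ] [IsNoetherianRing K] [Nontrivial K]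
    (hnd : (y :: ys ++ (x :: xs ++ zs)).Nodup) (hys : ys ≠ []) (hxs : xs ≠ []) (hzs : zs ≠ [])
    (hmod : (ys.length + xs.length + zs.length) % 3 = 2)
    (hyx : ¬ (ys.length % 3 = 1 ∧ xs.length % 3 = 1)) :
    ∃ S, NonzeroExt K (joinComplex y ys x xs zs) S
      (2 * ((ys.length + xs.length + zs.length) / 3) + 3) := by
  by_cases hy : ys.length % 3 = 0
  · rw [show 2 * ((ys.length + xs.length + zs.length) / 3) + 3 =
      2 * (ys.length + (xs.length + 1 + zs.length)) / 3 + 1 by omega]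
    exact exists_nonzeroExt_joinComplex_of_mod_eq_zero hnd hy hxs hzs (by omega)
  by_cases hx : xs.length % 3 = 0
  · have hswap : (x :: xs ++ (y :: ys ++ zs.reverse)).Nodup := by
      rw [← List.append_assoc] at hnd ⊢
      exact (List.perm_append_comm.append zs.reverse_perm.symm).nodup_iff.1 hnd
    rw [joinComplex_swap, show 2 * ((ys.length + xs.length + zs.length) / 3) + 3 =
      2 * (xs.length + (ys.length + 1 + zs.reverse.length)) / 3 + 1 by
        rw [List.length_reverse]; omega]
    exact exists_nonzeroExt_joinComplex_of_mod_eq_zero hswap hx hys (by simpa using hzs)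
      (by rw [List.length_reverse]; omega)
  · rw [show 2 * ((ys.length + xs.length + zs.length) / 3) + 3 = ys.length + xs.length +
      zs.length - (ys.length / 3 + xs.length / 3 + zs.length / 3) by omega]
    exact exists_nonzeroExt_joinComplex hnd hys hxs hzs

end Domination

section JoinCuts

universe u

variable {σ : Type u} {K : Type u} [CommRing K] {x y : σ} {xs ys zs : List σ} {i j k : ℕ}

namespace CutsOut

variable {Δ : LowerSet (Set σ)}

theorem path_or {a b : σ} {t : List σ} (ht : t.length = 3 * j)
    (h : ∀ F ∈ Δ, F ∈ walkComplex (a :: b :: t)) :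
    CutsOut K Δ (fun F => F ∈ walkComplex (a :: b :: t) ∨
      a ∈ F ∧ b ∈ F ∧ (b :: t).getLast (List.cons_ne_nil b t) ∈ F) (2 * j) := by
  induction j generalizing a b t with
  | zero =>
    obtain rfl : t = [] := List.eq_nil_of_length_eq_zero ht
    refine of_forall fun F => ?_
    simp only [mem_walkComplex_cons_cons, mem_walkComplex_singleton, List.getLast_singleton]
    tauto
  | succ j ih =>
    match t, ht with
    | c :: d :: e :: t, ht =>
      simp only [mem_walkComplex_cons_cons] at h
      have hab_cd := edge_add_edge (K := K) (fun F hF => (h F hF).1) fun F hF => (h F hF).2.2.1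
      have hbc_de := edge_add_edge (K := K) (fun F hF => (h F hF).2.1)
        fun F hF => (h F hF).2.2.2.1
      have htail := ih (a := d) (b := e) (t := t) (by simp only [List.length_cons] at ht; omega)
        fun F hF => mem_walkComplex_cons_cons.2 (h F hF).2.2.2
      rw [show 2 * (j + 1) = 1 + 1 + 2 * j by ring]
      -- If `d, e ∈ F`, then `b, c ∈ F` by `hbc_de`, so `c, d ∈ F` and `a, b ∈ F` by `hab_cd`.
      refine ((hab_cd.and hbc_de).and htail).mono fun F => ?_
      simp only [mem_walkComplex_cons_cons, List.getLast_cons_cons]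
      grind

/-- The two edges `y, z` and `z, w` beyond the cycle are paired with edges of the cycle, which
saves one polynomial over treating the cycle and the tail separately. -/
theorem cycle_with_tail {z w : σ} (hys : ys.length = 3 * j + 4)
    (hcycle : ∀ F ∈ Δ, F ∈ cycleComplex y ys) (hyz : ∀ F ∈ Δ, ¬ (y ∈ F ∧ z ∈ F))
    (hzw : ∀ F ∈ Δ, ¬ (z ∈ F ∧ w ∈ F)) :
    CutsOut K Δ (fun F => F ∈ cycleComplex y ys ∧ ¬ (y ∈ F ∧ z ∈ F) ∧ ¬ (z ∈ F ∧ w ∈ F))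
      (2 * j + 4) := by
  obtain ⟨a, b, t, q, r, rfl⟩ : ∃ a b t q r, ys = a :: b :: (t ++ [q, r]) := by
    match ys, hys with
    | a :: b :: l, hl =>
      obtain rfl | ⟨l, r, rfl⟩ := l.eq_nil_or_concat'
      · simp at hl
      obtain rfl | ⟨l, q, rfl⟩ := l.eq_nil_or_concat'
      · simp at hl
      exact ⟨a, b, l, q, r, by simp⟩
  set p := (b :: t).getLast (List.cons_ne_nil b t) with hp
  have key (F : Set σ) : F ∈ cycleComplex y (a :: b :: (t ++ [q, r])) ↔ ¬ (y ∈ F ∧ a ∈ F) ∧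
      F ∈ walkComplex (a :: b :: t) ∧ ¬ (p ∈ F ∧ q ∈ F) ∧ ¬ (q ∈ F ∧ r ∈ F) ∧
        ¬ (r ∈ F ∧ y ∈ F) := by
    simp only [cycleComplex, List.cons_append, List.append_assoc, List.nil_append,
      mem_walkComplex_cons_cons, mem_walkComplex_cons_append_cons, mem_walkComplex_singleton,
      and_true, and_assoc, ← hp]
  simp only [key] at hcycle
  have hpq := edge (K := K) fun F hF => (hcycle F hF).2.2.1
  have hqr_ya := edge_add_edge (K := K) (fun F hF => (hcycle F hF).2.2.2.1)
    fun F hF => (hcycle F hF).1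
  have hab_yz := edge_add_edge (K := K)
    (fun F hF => (mem_walkComplex_cons_cons.1 (hcycle F hF).2.1).1) hyz
  have hry_zw := edge_add_edge (K := K) (fun F hF => (hcycle F hF).2.2.2.2) hzw
  have hpath := path_or (K := K) (j := j)
    (by simp only [List.length_cons, List.length_append, List.length_nil] at hys; omega)
    fun F hF => (hcycle F hF).2.1
  rw [show 2 * j + 4 = 1 + 1 + 1 + 1 + 2 * j by ring]
  refine ((((hpq.and hqr_ya).and hab_yz).and hry_zw).and hpath).mono fun F => ?_
  rw [key, ← hp, mem_walkComplex_cons_cons]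
  grind

theorem joinComplex_of_zero (hys : ys.length = 3 * j + 2) (hxz : xs.length + zs.length = 3 * i)
    (hzs : zs ≠ []) :
    CutsOut K (joinComplex y ys x xs zs) (· ∈ joinComplex y ys x xs zs) (2 * j + 2 * i + 3) := by
  obtain ⟨zs, z, rfl⟩ := zs.eq_nil_or_concat'.resolve_left hzs
  match ys, hys with
  | a :: c :: t, hys =>
    set b := (c :: t).getLast (List.cons_ne_nil c t) with hb
    set w := (x :: zs).getLast (List.cons_ne_nil x zs) with hw
    have key (F : Set σ) : F ∈ joinComplex y (a :: c :: t) x xs (zs ++ [z]) ↔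
        (¬ (y ∈ F ∧ a ∈ F) ∧ ¬ (a ∈ F ∧ c ∈ F) ∧ F ∈ walkComplex (c :: t) ∧ ¬ (b ∈ F ∧ y ∈ F)) ∧
        F ∈ walkComplex (x :: (xs ++ x :: zs)) ∧ ¬ (w ∈ F ∧ z ∈ F) ∧ ¬ (z ∈ F ∧ y ∈ F) := by
      simp only [mem_joinComplex, List.append_assoc, List.cons_append,
        List.nil_append, mem_walkComplex_cons_cons, mem_walkComplex_cons_append_cons,
        mem_walkComplex_singleton, List.getLast_cons_cons, ← hb, ← hw]
      tauto
    have hzy := edge (K := K) fun F hF => ((key F).1 hF).2.2.2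
    have hya_wz := edge_add_edge (K := K) (fun F hF => ((key F).1 hF).1.1)
      fun F hF => ((key F).1 hF).2.2.1
    have hby_ac := edge_add_edge (K := K) (fun F hF => ((key F).1 hF).1.2.2.2)
      fun F hF => ((key F).1 hF).1.2.1
    have hcycle := path (K := K) (j := j) (by simpa using hys)
      fun F hF => ((key F).1 hF).1.2.2.1
    have hrest := path (K := K) (j := i)
      (by simp only [List.length_cons, List.length_append, List.length_nil] at hxz ⊢; omega)
      fun F hF => ((key F).1 hF).2.1
    rw [show 2 * j + 2 * i + 3 = 1 + 1 + 1 + 2 * j + 2 * i by ring]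
    refine ((((hzy.and hya_wz).and hby_ac).and hcycle).and hrest).mono fun F => ?_
    rw [key]
    grind

theorem joinComplex_of_one (hys : ys.length = 3 * j + 3)
    (hxz : xs.length + zs.length + 1 = 3 * i) :
    CutsOut K (joinComplex y ys x xs zs) (· ∈ joinComplex y ys x xs zs) (2 * j + 2 * i + 3) := by
  obtain ⟨a, c, t, b, rfl⟩ : ∃ a c t b, ys = a :: c :: (t ++ [b]) := by
    match ys, hys with
    | a :: c :: l, hl =>
      obtain rfl | ⟨l, b, rfl⟩ := l.eq_nil_or_concat'
      · simp at hl
      exact ⟨a, c, l, b, rfl⟩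
  set e := (c :: t).getLast (List.cons_ne_nil c t) with he
  set z := (x :: zs).getLast (List.cons_ne_nil x zs) with hz
  have key (F : Set σ) : F ∈ joinComplex y (a :: c :: (t ++ [b])) x xs zs ↔
      (¬ (y ∈ F ∧ a ∈ F) ∧ ¬ (a ∈ F ∧ c ∈ F) ∧ F ∈ walkComplex (c :: t) ∧ ¬ (e ∈ F ∧ b ∈ F) ∧
        ¬ (b ∈ F ∧ y ∈ F)) ∧
      F ∈ walkComplex (x :: (xs ++ x :: zs)) ∧ ¬ (z ∈ F ∧ y ∈ F) := by
    simp only [mem_joinComplex, mem_cycleComplex (a := x), cycleComplex, List.append_assoc,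
      List.cons_append, List.nil_append, mem_walkComplex_cons_cons,
      mem_walkComplex_cons_append_cons, mem_walkComplex_singleton, ← he, ← hz]
    tauto
  have hya := edge (K := K) fun F hF => ((key F).1 hF).1.1
  have hby_ac := edge_add_edge (K := K) (fun F hF => ((key F).1 hF).1.2.2.2.2)
    fun F hF => ((key F).1 hF).1.2.1
  have hzy_eb := edge_add_edge (K := K) (fun F hF => ((key F).1 hF).2.2)
    fun F hF => ((key F).1 hF).1.2.2.2.1
  have hcycle := path (K := K) (j := j)
    (by simp only [List.length_cons, List.length_append, List.length_nil] at hys ⊢; omega)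
    fun F hF => ((key F).1 hF).1.2.2.1
  have hrest := path (K := K) (j := i)
    (by simp only [List.length_cons, List.length_append]; omega) fun F hF => ((key F).1 hF).2.1
  rw [show 2 * j + 2 * i + 3 = 1 + 1 + 1 + 2 * j + 2 * i by ring]
  refine ((((hya.and hby_ac).and hzy_eb).and hcycle).and hrest).mono fun F => ?_
  rw [key]
  grind

theorem joinComplex_of_two_of_two (hys : ys.length = 3 * j + 4) (hxs : xs.length = 3 * i + 4)
    (hzs : zs.length = 3 * k + 3) :
    CutsOut K (joinComplex y ys x xs zs) (· ∈ joinComplex y ys x xs zs)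
      (2 * j + 2 * i + 2 * k + 8) := by
  obtain ⟨z, w, t, v, rfl⟩ : ∃ z w t v, zs = z :: w :: (t ++ [v]) := by
    match zs, hzs with
    | z :: w :: l, hl =>
      obtain rfl | ⟨l, v, rfl⟩ := l.eq_nil_or_concat'
      · simp at hl
      exact ⟨z, w, l, v, rfl⟩
  set u := (w :: t).getLast (List.cons_ne_nil w t) with hu
  have key (F : Set σ) : F ∈ joinComplex y ys x xs (z :: w :: (t ++ [v])) ↔
      (F ∈ cycleComplex y ys ∧ ¬ (y ∈ F ∧ v ∈ F) ∧ ¬ (v ∈ F ∧ u ∈ F)) ∧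
      (F ∈ cycleComplex x xs ∧ ¬ (x ∈ F ∧ z ∈ F) ∧ ¬ (z ∈ F ∧ w ∈ F)) ∧
      F ∈ walkComplex (w :: t) := by
    simp only [mem_joinComplex, List.append_assoc, List.cons_append, List.nil_append,
      mem_walkComplex_cons_cons (a := x), mem_walkComplex_cons_cons (a := z),
      mem_walkComplex_cons_append_cons (a := w), mem_walkComplex_cons_cons (a := v),
      mem_walkComplex_singleton, ← hu]
    tauto
  have hy := cycle_with_tail (K := K) hys (fun F hF => ((key F).1 hF).1.1)
    (fun F hF => ((key F).1 hF).1.2.1) fun F hF => ((key F).1 hF).1.2.2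
  have hx := cycle_with_tail (K := K) hxs (fun F hF => ((key F).1 hF).2.1.1)
    (fun F hF => ((key F).1 hF).2.1.2.1) fun F hF => ((key F).1 hF).2.1.2.2
  have hpath := path (K := K) (j := k)
    (by simp only [List.length_cons, List.length_append, List.length_nil] at hzs ⊢; omega)
    fun F hF => ((key F).1 hF).2.2
  rw [show 2 * j + 2 * i + 2 * k + 8 = 2 * j + 4 + (2 * i + 4) + 2 * k by ring]
  refine ((hy.and hx).and hpath).mono fun F => ?_
  rw [key]
  tauto

theorem joinComplex_of_not (hys : 2 ≤ ys.length) (hxs : 2 ≤ xs.length) (hzs : zs ≠ [])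
    (hmod : (ys.length + xs.length + zs.length) % 3 = 2)
    (hyx : ¬ (ys.length % 3 = 1 ∧ xs.length % 3 = 1)) :
    CutsOut K (joinComplex y ys x xs zs) (· ∈ joinComplex y ys x xs zs)
      (2 * ((ys.length + xs.length + zs.length) / 3) + 3) := by
  wlog hy : ys.length % 3 ≠ 1 generalizing y ys x xs zs
  · have hswap := this (y := x) (x := y) (zs := zs.reverse) hxs hys (by simpa using hzs)
      (by rw [List.length_reverse]; omega) (by tauto) (by tauto)
    rwa [← joinComplex_swap, List.length_reverse, add_comm xs.length] at hswap
  obtain ⟨j, hj | hj⟩ : ∃ j, ys.length = 3 * j + 2 ∨ ys.length = 3 * j + 3 :=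
    ⟨(ys.length - 2) / 3, by omega⟩
  · obtain ⟨i, hi⟩ : ∃ i, xs.length + zs.length = 3 * i := ⟨(xs.length + zs.length) / 3, by omega⟩
    rw [show 2 * ((ys.length + xs.length + zs.length) / 3) + 3 = 2 * j + 2 * i + 3 by omega]
    exact joinComplex_of_zero hj hi hzs
  · obtain ⟨i, hi⟩ : ∃ i, xs.length + zs.length + 1 = 3 * i :=
      ⟨(xs.length + zs.length + 1) / 3, by omega⟩
    rw [show 2 * ((ys.length + xs.length + zs.length) / 3) + 3 = 2 * j + 2 * i + 3 by omega]
    exact joinComplex_of_one hj hi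

end CutsOut

end JoinCuts

section Invariants

variable {σ K : Type} [CommRing K] [IsNoetherianRing K] [Finite σ]

theorem araRank_eq_and_projDim_eq {Δ : LowerSet (Set σ)} {S : Set σ} {d : ℕ} (hd : 0 < d)
    (hcut : CutsOut K Δ (· ∈ Δ) d) (hS : NonzeroExt K Δ S d) :
    araRank (srIdeal K Δ) = d ∧
      projDim (MvPolynomial σ K) (MvPolynomial σ K ⧸ srIdeal K Δ) = d := by
  obtain ⟨f, hf⟩ := hcut.exists_radical_eq
  refine ⟨le_antisymm (Nat.sInf_le ⟨f, hf⟩) (le_csInf ⟨d, f, hf⟩ ?_),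
    le_antisymm (projDim_le_iff.2 (hcut.hasProjectiveDimensionLT le_rfl)) ?_⟩
  · rintro s ⟨g, hg⟩
    by_contra! hs
    have := hasProjectiveDimensionLT_of_radical_eq g hg
    exact hS.not_hasProjectiveDimensionLT
      (CategoryTheory.hasProjectiveDimensionLT_of_ge _ (s + 1) d hs)
  · by_contra! hlt
    obtain ⟨d, rfl⟩ := Nat.exists_eq_add_of_le' hd
    rw [Nat.cast_add_one, ENat.lt_natCast_add_one_iff, projDim_le_iff] at hlt
    exact hS.not_hasProjectiveDimensionLT hlt

variable [Nontrivial K] {y x : σ} {ys xs zs : List σ}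

theorem araRank_eq_and_projDim_eq_joinComplex_of_two_of_two
    (hnd : (y :: ys ++ (x :: xs ++ zs)).Nodup) (hys : 2 ≤ ys.length) (hxs : 2 ≤ xs.length)
    (hzs : zs ≠ []) (hmod : (ys.length + xs.length + zs.length) % 3 = 2)
    (hyx : ys.length % 3 = 1 ∧ xs.length % 3 = 1) {d : ℕ}
    (hd : d = 2 * ((ys.length + xs.length + zs.length) / 3) + 2) :
    araRank (srIdeal K (joinComplex y ys x xs zs)) = d ∧
      projDim (MvPolynomial σ K)
        (MvPolynomial σ K ⧸ srIdeal K (joinComplex y ys x xs zs)) = d := by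
  have hzs' := List.length_pos_iff.2 hzs
  obtain ⟨j, hj⟩ : ∃ j, ys.length = 3 * j + 4 := ⟨ys.length / 3 - 1, by omega⟩
  obtain ⟨i, hi⟩ : ∃ i, xs.length = 3 * i + 4 := ⟨xs.length / 3 - 1, by omega⟩
  obtain ⟨k, hk⟩ : ∃ k, zs.length = 3 * k + 3 := ⟨zs.length / 3 - 1, by omega⟩
  obtain ⟨S, hS⟩ := exists_nonzeroExt_joinComplex (K := K) hnd (by grind) (by grind) hzs
  obtain rfl : d = 2 * j + 2 * i + 2 * k + 8 := by omega
  refine araRank_eq_and_projDim_eq (by omega) (CutsOut.joinComplex_of_two_of_two hj hi hk)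
    (S := S) ?_
  convert hS using 1
  omega

theorem araRank_eq_and_projDim_eq_joinComplex_of_not
    (hnd : (y :: ys ++ (x :: xs ++ zs)).Nodup) (hys : 2 ≤ ys.length) (hxs : 2 ≤ xs.length)
    (hzs : zs ≠ []) (hmod : (ys.length + xs.length + zs.length) % 3 = 2)
    (hyx : ¬ (ys.length % 3 = 1 ∧ xs.length % 3 = 1)) {d : ℕ}
    (hd : d = 2 * ((ys.length + xs.length + zs.length) / 3) + 3) :
    araRank (srIdeal K (joinComplex y ys x xs zs)) = d ∧
      projDim (MvPolynomial σ K)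
        (MvPolynomial σ K ⧸ srIdeal K (joinComplex y ys x xs zs)) = d := by
  subst hd
  obtain ⟨S, hS⟩ :=
    exists_nonzeroExt_joinComplex_of_not (K := K) hnd (by grind) (by grind) hzs hmod hyx
  exact araRank_eq_and_projDim_eq (by omega) (CutsOut.joinComplex_of_not hys hxs hzs hmod hyx) hS

end Invariants

section EdgeIdeal

universe u

theorem isChain_ne_cons_concat_of_nodup {α : Type u} {a : α} {l : List α} (h : (a :: l).Nodup)
    (hl : l ≠ []) : (a :: (l ++ [a])).IsChain (· ≠ ·) := by
  match l, hl with
  | b :: l, _ =>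
    rw [List.cons_append, List.isChain_cons_cons]
    exact ⟨by grind, List.Pairwise.isChain (by grind)⟩

variable {σ K : Type u} [CommRing K] {J : Ideal (MvPolynomial σ K)}

theorem X_mul_X_dvd_monomial {a b : σ} {m : σ →₀ ℕ} (hab : a ≠ b) (ha : a ∈ m.support)
    (hb : b ∈ m.support) : (X a * X b : MvPolynomial σ K) ∣ monomial m 1 := by
  classical
  rw [X, X, monomial_mul, one_mul, monomial_dvd_monomial]
  refine ⟨Or.inr fun v => ?_, one_dvd 1⟩
  rw [Finsupp.mem_support_iff] at ha hb
  simp only [Finsupp.add_apply, Finsupp.single_apply]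
  grind

theorem srIdeal_walkComplex_le_iff {l : List σ} (hl : l.IsChain (· ≠ ·)) :
    srIdeal K (walkComplex l) ≤ J ↔ l.IsChain fun a b => X a * X b ∈ J := by
  constructor
  · intro h
    rw [List.isChain_iff_getElem]
    exact fun i hi => h (X_mul_X_mem_srIdeal fun F hF => List.isChain_iff_getElem.1 hF i hi)
  · refine fun h => srIdeal_le_iff.2 fun m hm => ?_
    rw [mem_walkComplex, List.isChain_iff_getElem] at hm
    push Not at hm
    obtain ⟨i, hi, ha, hb⟩ := hm
    exact J.mem_of_dvd (X_mul_X_dvd_monomial (List.isChain_iff_getElem.1 hl i hi) ha hb)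
      (List.isChain_iff_getElem.1 h i hi)

theorem srIdeal_joinComplex_le_iff {y x : σ} {ys xs zs : List σ}
    (hnd : (y :: ys ++ (x :: xs ++ zs)).Nodup) (hys : ys ≠ []) (hxs : xs ≠ []) :
    srIdeal K (joinComplex y ys x xs zs) ≤ J ↔
      (y :: (ys ++ [y])).IsChain (fun a b => X a * X b ∈ J) ∧
      (x :: (xs ++ [x])).IsChain (fun a b => X a * X b ∈ J) ∧
      (x :: (zs ++ [y])).IsChain (fun a b => X a * X b ∈ J) := by
  have hpath : (x :: (zs ++ [y])).Nodup := by grind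
  rw [joinComplex, srIdeal_inf, srIdeal_inf, sup_le_iff, sup_le_iff, and_assoc,
    srIdeal_walkComplex_le_iff (isChain_ne_cons_concat_of_nodup (by grind) hys),
    srIdeal_walkComplex_le_iff (isChain_ne_cons_concat_of_nodup (by grind) hxs),
    srIdeal_walkComplex_le_iff (List.Pairwise.isChain hpath)]

end EdgeIdeal

section PathJoin

universe u

theorem isChain_cons_map_range'_concat {α : Type u} {R : α → α → Prop} {g : ℕ → α} {s l : ℕ}
    {c : α} : (g s :: ((List.range' (s + 1) l).map g ++ [c])).IsChain R ↔
      (∀ i ∈ Set.Ico s (s + l), R (g i) (g (i + 1))) ∧ R (g (s + l)) c := by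
  induction l generalizing s with
  | zero => simp
  | succ l ih =>
    have hIco : Set.Ico s (s + (l + 1)) = insert s (Set.Ico (s + 1) (s + 1 + l)) := by
      ext i
      simp only [Set.mem_Ico, Set.mem_insert_iff]
      omega
    rw [List.range'_succ, List.map_cons, List.cons_append, List.isChain_cons_cons, ih, hIco,
      Set.forall_mem_insert, and_assoc, add_right_comm, add_assoc s l 1]

variable (n m k : ℕ)

theorem nodup_map_cast_range (N : ℕ) : ((List.range N).map (Nat.cast : ℕ → ZMod N)).Nodup :=
  List.nodup_range.map_on fun _ ha _ hb h =>
    CharP.natCast_injOn_Iio (ZMod N) N (List.mem_range.1 ha) (List.mem_range.1 hb) h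

/-- The vertices of `Cₙ` other than `y₁ = 0`, in cyclic order. -/
def firstCycle : List (ZMod (n + m + k)) := (List.range' 1 (n - 1)).map Nat.cast

/-- The vertices of `C_m` other than `x₁ = n`, in cyclic order. -/
def secondCycle : List (ZMod (n + m + k)) := (List.range' (n + 1) (m - 1)).map Nat.cast

/-- The vertices `z₁, …, z_k`. -/
def connectingPath : List (ZMod (n + m + k)) := (List.range' (n + m) k).map Nat.cast

/-- The independence complex of the graph with edge ideal `pathJoinIdeal K n m k`. -/
abbrev pathJoinComplex : LowerSet (Set (ZMod (n + m + k))) :=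
  joinComplex 0 (firstCycle n m k) n (secondCycle n m k) (connectingPath n m k)

theorem length_firstCycle : (firstCycle n m k).length = n - 1 := by simp [firstCycle]

theorem length_secondCycle : (secondCycle n m k).length = m - 1 := by simp [secondCycle]

theorem length_connectingPath : (connectingPath n m k).length = k := by simp [connectingPath]

variable {n m}

theorem nodup_pathJoin_vertices (hn : 0 < n) (hm : 0 < m) :
    (0 :: firstCycle n m k ++
      ((n : ZMod (n + m + k)) :: secondCycle n m k ++ connectingPath n m k)).Nodup := by
  obtain ⟨n, rfl⟩ := Nat.exists_eq_add_of_le' hn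
  obtain ⟨m, rfl⟩ := Nat.exists_eq_add_of_le' hm
  convert nodup_map_cast_range (n + 1 + (m + 1) + k)
  rw [List.range_eq_range', ← List.range'_append_1, ← List.range'_append_1, List.range'_succ,
    List.range'_succ]
  simp [firstCycle, secondCycle, connectingPath]

variable (n m)

theorem map_pathJoinVertex_range :
    (List.range (k + 2)).map (pathJoinVertex n m k) =
      (n : ZMod (n + m + k)) :: (connectingPath n m k ++ [0]) := by
  have hinterior : (List.range k).map (fun i => pathJoinVertex n m k (i + 1)) =
      connectingPath n m k := by
    rw [connectingPath, List.range'_eq_map_range, List.map_map]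
    refine List.map_congr_left fun i hi => ?_
    simp [pathJoinVertex, (List.mem_range.1 hi).ne, ← add_assoc]
  rw [List.range_succ, List.range_succ_eq_map, ← hinterior]
  simp [pathJoinVertex, Function.comp_def]

variable {n m}

theorem pathJoinIdeal_eq_srIdeal (K : Type) [Field K] (hn : 2 ≤ n) (hm : 2 ≤ m) :
    pathJoinIdeal K n m k = srIdeal K (pathJoinComplex n m k) := by
  refine eq_of_forall_ge_iff fun J => ?_
  have hfirst := isChain_cons_map_range'_concat (g := (Nat.cast : ℕ → ZMod (n + m + k)))
    (R := fun a b => (X a * X b : MvPolynomial _ K) ∈ J) (s := 0) (l := n - 1) (c := 0)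
  have hsecond := isChain_cons_map_range'_concat (g := (Nat.cast : ℕ → ZMod (n + m + k)))
    (R := fun a b => (X a * X b : MvPolynomial _ K) ∈ J) (s := n) (l := m - 1) (c := n)
  rw [zero_add, zero_add, Nat.cast_zero, ← firstCycle] at hfirst
  rw [← secondCycle, ← Nat.add_sub_assoc (by omega)] at hsecond
  rw [srIdeal_joinComplex_le_iff (nodup_pathJoin_vertices k (by omega) (by omega))
    (List.ne_nil_of_length_pos (by rw [length_firstCycle]; omega))
    (List.ne_nil_of_length_pos (by rw [length_secondCycle]; omega)),
    hfirst, hsecond, ← map_pathJoinVertex_range, List.isChain_map, List.isChain_range_succ,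
    pathJoinIdeal, Ideal.span_le]
  simp only [Set.union_subset_iff, Set.image_subset_iff, Set.singleton_subset_iff,
    SetLike.mem_coe, Set.mem_Ico, Nat.zero_le, true_and, and_assoc]
  exact Iff.rfl

end PathJoin

/-- For the graph `G` made of two cycles `Cₙ`, `C_m` (`n, m ≥ 3`) joined by a path with
`k ≥ 1` internal vertices, `N = n + m + k`: if `N ≡ 1 (mod 3)` then
`ara I(G) = pd R/I(G) = (2N-2)/3` when `n ≡ m ≡ 2 (mod 3)`, and
`ara I(G) = pd R/I(G) = (2N+1)/3` otherwise. -/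
theorem path_join_ara_eq_pd_one_mod_three (K : Type) [Field K] (n m k : ℕ)
    (hn : 3 ≤ n) (hm : 3 ≤ m) (hk : 1 ≤ k) (hN : (n + m + k) % 3 = 1) :
    ((n % 3 = 2 ∧ m % 3 = 2) →
        araRank (pathJoinIdeal K n m k) = (2 * (n + m + k) - 2) / 3 ∧
          projDim (MvPolynomial (ZMod (n + m + k)) K)
              (MvPolynomial (ZMod (n + m + k)) K ⧸ pathJoinIdeal K n m k) =
            (((2 * (n + m + k) - 2) / 3 : ℕ) : ℕ∞)) ∧
      (¬(n % 3 = 2 ∧ m % 3 = 2) →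
        araRank (pathJoinIdeal K n m k) = (2 * (n + m + k) + 1) / 3 ∧
          projDim (MvPolynomial (ZMod (n + m + k)) K)
              (MvPolynomial (ZMod (n + m + k)) K ⧸ pathJoinIdeal K n m k) =
            (((2 * (n + m + k) + 1) / 3 : ℕ) : ℕ∞)) := by
  rw [pathJoinIdeal_eq_srIdeal k K (by omega) (by omega)]
  have hnd := nodup_pathJoin_vertices k (show 0 < n by omega) (show 0 < m by omega)
  have : NeZero (n + m + k) := ⟨by omega⟩
  have hzs : connectingPath n m k ≠ [] :=
    List.ne_nil_of_length_pos (by rwa [length_connectingPath])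
  constructor
  · intro h
    apply araRank_eq_and_projDim_eq_joinComplex_of_two_of_two hnd _ _ hzs <;>
    · simp only [length_firstCycle, length_secondCycle, length_connectingPath]
      omega
  · intro h
    apply araRank_eq_and_projDim_eq_joinComplex_of_not hnd _ _ hzs <;>
    · simp only [length_firstCycle, length_secondCycle, length_connectingPath]
      omega
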